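/- Every maximal almost rigid representation of Q contains each of the representations H(α) and C(α), for every arrow α of Q, as a direct summand. -/

import Mathlib

open scoped Classical

noncomputable section

namespace CambrianA

/-! ### Combinatorics of a type `A_{n+2}` quiver.

Vertices are `1, …, n+2`.  For `1 ≤ i ≤ n+1`, `ε i = true` means that the arrow between
`i` and `i+1` is oriented `i → i+1` (`i` is *upper-barred*), and `ε i = false` means it is
oriented `(i+1) → i` (`i` is *lower-barred*). -/

/-- `MaxIncr n ε i j` : the path `i → i+1 → ⋯ → j` is a maximal increasing path of `Q`. -/
def MaxIncr (n : ℕ) (ε : ℕ → Bool) (i j : ℕ) : Prop :=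
  1 ≤ i ∧ i ≤ j ∧ j ≤ n + 2 ∧ (∀ ℓ, i ≤ ℓ → ℓ < j → ε ℓ = true) ∧
    (i = 1 ∨ ε (i - 1) = false) ∧ (j = n + 2 ∨ ε j = false)

/-- `MaxDecr n ε i j` : the path `i → i-1 → ⋯ → j` is a maximal decreasing path of `Q`. -/
def MaxDecr (n : ℕ) (ε : ℕ → Bool) (i j : ℕ) : Prop :=
  1 ≤ j ∧ j ≤ i ∧ i ≤ n + 2 ∧ (∀ ℓ, j ≤ ℓ → ℓ < i → ε ℓ = false) ∧
    (i = n + 2 ∨ ε i = true) ∧ (j = 1 ∨ ε (j - 1) = true)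

/-- Vertices of the polygon lying on the lower boundary: `0`, `n+2` and lower-barred ones. -/
def LowerVertex (n : ℕ) (ε : ℕ → Bool) (x : ℕ) : Prop :=
  x = 0 ∨ x = n + 2 ∨ (1 ≤ x ∧ x ≤ n + 1 ∧ ε x = false)

/-- Vertices of the polygon lying on the upper boundary: `0`, `n+2` and upper-barred ones. -/
def UpperVertex (n : ℕ) (ε : ℕ → Bool) (x : ℕ) : Prop :=
  x = 0 ∨ x = n + 2 ∨ (1 ≤ x ∧ x ≤ n + 1 ∧ ε x = true)

/-- `(a,b)` is a lower boundary edge: `a < b` are consecutive lower vertices. -/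
def LowerEdge (n : ℕ) (ε : ℕ → Bool) (a b : ℕ) : Prop :=
  LowerVertex n ε a ∧ LowerVertex n ε b ∧ a < b ∧
    ∀ c, LowerVertex n ε c → ¬(a < c ∧ c < b)

/-- `(a,b)` is an upper boundary edge: `a < b` are consecutive upper vertices. -/
def UpperEdge (n : ℕ) (ε : ℕ → Bool) (a b : ℕ) : Prop :=
  UpperVertex n ε a ∧ UpperVertex n ε b ∧ a < b ∧
    ∀ c, UpperVertex n ε c → ¬(a < c ∧ c < b)

def BoundaryEdge (n : ℕ) (ε : ℕ → Bool) (a b : ℕ) : Prop :=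
  LowerEdge n ε a b ∨ UpperEdge n ε a b

/-- `IsHook n ε a lo hi` : the hook of the arrow of `Q` between `a` and `a+1` is the
maximal path supported on the interval `[lo, hi]`.
If `ε a = true` (arrow `a → a+1`, source `a`), the hook is the maximal decreasing path
starting at `a`; if `ε a = false` (arrow `a+1 → a`, source `a+1`), the hook is the
maximal increasing path starting at `a+1`. -/
def IsHook (n : ℕ) (ε : ℕ → Bool) (a lo hi : ℕ) : Prop :=
  if ε a = true then
    hi = a ∧ 1 ≤ lo ∧ lo ≤ a ∧ (∀ ℓ, lo ≤ ℓ → ℓ < a → ε ℓ = false) ∧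
      (lo = 1 ∨ ε (lo - 1) = true)
  else
    lo = a + 1 ∧ a + 1 ≤ hi ∧ hi ≤ n + 2 ∧ (∀ ℓ, a + 1 ≤ ℓ → ℓ < hi → ε ℓ = true) ∧
      (hi = n + 2 ∨ ε hi = false)

/-- `IsCohook n ε a lo hi` : the cohook of the arrow of `Q` between `a` and `a+1` is the
maximal path supported on the interval `[lo, hi]`, ending at the target of the arrow. -/
def IsCohook (n : ℕ) (ε : ℕ → Bool) (a lo hi : ℕ) : Prop :=
  if ε a = true then
    lo = a + 1 ∧ a + 1 ≤ hi ∧ hi ≤ n + 2 ∧ (∀ ℓ, a + 1 ≤ ℓ → ℓ < hi → ε ℓ = false) ∧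
      (hi = n + 2 ∨ ε hi = true)
  else
    hi = a ∧ 1 ≤ lo ∧ lo ≤ a ∧ (∀ ℓ, lo ≤ ℓ → ℓ < a → ε ℓ = true) ∧
      (lo = 1 ∨ ε (lo - 1) = false)

/-- Counterclockwise neighbor `R⁻¹(ℓ)` of the vertex `ℓ` of the polygon `P(Q)`, for the
cyclic order `0`, lower-barred vertices increasing, `n+2`, upper-barred vertices
decreasing. -/
def Rinv (n : ℕ) (ε : ℕ → Bool) (ℓ : ℕ) : ℕ :=
  if ℓ = n + 2 then sSup ({0} ∪ {x | 1 ≤ x ∧ x ≤ n + 1 ∧ ε x = true})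
  else if 1 ≤ ℓ ∧ ℓ ≤ n + 1 ∧ ε ℓ = true then
    sSup ({0} ∪ {x | 1 ≤ x ∧ x < ℓ ∧ ε x = true})
  else
    sInf ({n + 2} ∪ {x | ℓ < x ∧ x ≤ n + 1 ∧ ε x = false})

/-- `γ(i′,j′)` is a pivot of `γ(i,j)`. -/
def IsPivot (n : ℕ) (ε : ℕ → Bool) (i j i' j' : ℕ) : Prop :=
  (i' = Rinv n ε i ∧ j' = j ∧ Rinv n ε i < j) ∨
    (i' = i ∧ j' = Rinv n ε j ∧ i < Rinv n ε j)

/-! ### Geometry of the polygon `P(Q)`.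

The plane is identified with `ℂ`; `p x` is the vertex of the polygon labeled `x`,
for `0 ≤ x ≤ n+2`. -/

/-- The hypotheses on the points `p 0, …, p (n+2)` realizing the polygon `P(Q)`:
strictly increasing `x`-coordinates; `p 0` and `p (n+2)` on a common horizontal line `L`;
upper-barred vertices above `L`, lower-barred vertices below `L`; convex position. -/
def PolyPts (n : ℕ) (ε : ℕ → Bool) (p : ℕ → ℂ) : Prop :=
  (∀ a b, a < b → b ≤ n + 2 → (p a).re < (p b).re) ∧
    (p (n + 2)).im = (p 0).im ∧
    (∀ i, 1 ≤ i → i ≤ n + 1 →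
      (ε i = true → (p 0).im < (p i).im) ∧ (ε i = false → (p i).im < (p 0).im)) ∧
    ∀ i, i ≤ n + 2 → p i ∉ convexHull ℝ (p '' {j | j ≤ n + 2 ∧ j ≠ i})

/-- The line segment `γ(e.1, e.2)` of the polygon. -/
def Seg (p : ℕ → ℂ) (e : ℕ × ℕ) : Set ℂ := segment ℝ (p e.1) (p e.2)

/-- Two segments cross when they intersect in a point that is not a common endpoint. -/
def Cross (p : ℕ → ℂ) (e f : ℕ × ℕ) : Prop :=
  ∃ z, z ∈ Seg p e ∧ z ∈ Seg p f ∧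
    ¬((z = p e.1 ∨ z = p e.2) ∧ (z = p f.1 ∨ z = p f.2))

/-- Slope of the segment `γ(e.1, e.2)`. -/
def slope (p : ℕ → ℂ) (e : ℕ × ℕ) : ℝ :=
  ((p e.2).im - (p e.1).im) / ((p e.2).re - (p e.1).re)

def ValidPair (n : ℕ) (e : ℕ × ℕ) : Prop := e.1 < e.2 ∧ e.2 ≤ n + 2

/-- A triangulation of `P(Q)`: a maximal collection of pairwise noncrossing segments. -/
def IsTriangulation (n : ℕ) (p : ℕ → ℂ) (T : Finset (ℕ × ℕ)) : Prop :=
  (∀ e ∈ T, ValidPair n e) ∧ (∀ e ∈ T, ∀ f ∈ T, e ≠ f → ¬Cross p e f) ∧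
    ∀ e, ValidPair n e → e ∉ T → ∃ f ∈ T, Cross p e f

/-- Cross product of two planar vectors; positive iff `(u, v)` is counterclockwise. -/
def cross2 (u v : ℂ) : ℝ := u.re * v.im - u.im * v.re

/-- Arrows of the adjacency quiver `Q(T)` of a triangulation `T`: `e → f` whenever
`e` and `f` are sides of a common triangle of `T` and `f` follows `e` going
counterclockwise around that triangle. -/
def TriArrow (p : ℕ → ℂ) (T : Finset (ℕ × ℕ)) (e f : ℕ × ℕ) : Prop :=
  ∃ a b c : ℕ, a < b ∧ b < c ∧ (a, b) ∈ T ∧ (b, c) ∈ T ∧ (a, c) ∈ T ∧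
    ((0 < cross2 (p b - p a) (p c - p a) ∧
        ((e = (a, b) ∧ f = (b, c)) ∨ (e = (b, c) ∧ f = (a, c)) ∨
          (e = (a, c) ∧ f = (a, b)))) ∨
      (cross2 (p b - p a) (p c - p a) < 0 ∧
        ((e = (a, c) ∧ f = (b, c)) ∨ (e = (b, c) ∧ f = (a, b)) ∨
          (e = (a, b) ∧ f = (a, c)))))

/-! ### Representations of `Q` -/

/-- A finite dimensional representation of the quiver `Q` of type `A_{n+2}` over `k`.
The vector spaces are indexed by `ℕ`, and are required to vanish outside the set
`{1, …, n+2}` of vertices of `Q`.  For each `i`, `fwd i : V i → V (i+1)` is the structure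
map of the arrow `i → i+1` (it is required to vanish when the arrow is oriented in the
other direction, i.e. `ε i = false`) and `bwd i : V (i+1) → V i` is the structure map of
the arrow `i+1 → i` (required to vanish when `ε i = true`). -/
structure ARep (k : Type) [Field k] (n : ℕ) (ε : ℕ → Bool) where
  V : ℕ → Type
  [acg : ∀ x, AddCommGroup (V x)]
  [mod : ∀ x, Module k (V x)]
  [fdim : ∀ x, FiniteDimensional k (V x)]
  triv : ∀ x, x = 0 ∨ n + 2 < x → ∀ v : V x, v = 0
  fwd : ∀ i, V i →ₗ[k] V (i + 1)
  bwd : ∀ i, V (i + 1) →ₗ[k] V i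
  fwd_zero : ∀ i, ε i = false → fwd i = 0
  bwd_zero : ∀ i, ε i = true → bwd i = 0

attribute [instance] ARep.acg ARep.mod ARep.fdim

variable {k : Type} [Field k] {n : ℕ} {ε : ℕ → Bool}

/-- Morphisms of representations. -/
@[ext]
structure ARep.Hom (M N : ARep k n ε) where
  app : ∀ x, M.V x →ₗ[k] N.V x
  comm_fwd : ∀ i (v : M.V i), app (i + 1) (M.fwd i v) = N.fwd i (app i v)
  comm_bwd : ∀ i (v : M.V (i + 1)), app i (M.bwd i v) = N.bwd i (app (i + 1) v)

/-- The identity morphism. -/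
def ARep.Hom.id (M : ARep k n ε) : M.Hom M :=
  ⟨fun _ => LinearMap.id, fun _ _ => rfl, fun _ _ => rfl⟩

/-- Composition of morphisms. -/
def ARep.Hom.comp {M N P : ARep k n ε} (g : N.Hom P) (f : M.Hom N) : M.Hom P where
  app x := (g.app x).comp (f.app x)
  comm_fwd i v := by simp only [LinearMap.comp_apply, f.comm_fwd, g.comm_fwd]
  comm_bwd i v := by simp only [LinearMap.comp_apply, f.comm_bwd, g.comm_bwd]

/-- Sum of two morphisms. -/
def ARep.Hom.add {M N : ARep k n ε} (f g : M.Hom N) : M.Hom N where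
  app x := f.app x + g.app x
  comm_fwd i v := by
    simp only [LinearMap.add_apply, f.comm_fwd, g.comm_fwd, map_add]
  comm_bwd i v := by
    simp only [LinearMap.add_apply, f.comm_bwd, g.comm_bwd, map_add]

/-- Scalar multiple of a morphism. -/
def ARep.Hom.smul {M N : ARep k n ε} (c : k) (f : M.Hom N) : M.Hom N where
  app x := c • f.app x
  comm_fwd i v := by simp only [LinearMap.smul_apply, f.comm_fwd, map_smul]
  comm_bwd i v := by simp only [LinearMap.smul_apply, f.comm_bwd, map_smul]

/-- Isomorphism of representations. -/
def ARep.Iso (M N : ARep k n ε) : Prop :=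
  ∃ f : M.Hom N, ∀ x, Function.Bijective (f.app x)

/-- The zero representation(s). -/
def ARep.IsZero (M : ARep k n ε) : Prop := ∀ x, ∀ v : M.V x, v = 0

/-- The support of a representation. -/
def ARep.supp (M : ARep k n ε) : Set ℕ := {x | ∃ v : M.V x, v ≠ 0}

/-- Direct sum of two representations. -/
def ARep.dsum (M N : ARep k n ε) : ARep k n ε where
  V x := M.V x × N.V x
  acg _ := by infer_instance
  mod _ := by infer_instance
  fdim _ := by infer_instance
  triv x hx v := by
    have h1 := M.triv x hx v.1
    have h2 := N.triv x hx v.2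
    exact Prod.ext h1 h2
  fwd i := (M.fwd i).prodMap (N.fwd i)
  bwd i := (M.bwd i).prodMap (N.bwd i)
  fwd_zero i h := by
    show (M.fwd i).prodMap (N.fwd i) = 0
    rw [M.fwd_zero i h, N.fwd_zero i h]
    apply LinearMap.ext; rintro ⟨a, b⟩; simp
  bwd_zero i h := by
    show (M.bwd i).prodMap (N.bwd i) = 0
    rw [M.bwd_zero i h, N.bwd_zero i h]
    apply LinearMap.ext; rintro ⟨a, b⟩; simp

/-- One dimensional space `k` if `P` holds, `0` otherwise (as a submodule of `k`). -/
def fiber (k : Type) [Field k] (P : Prop) : Submodule k k := if P then ⊤ else ⊥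

/-- The canonical map `fiber k P → fiber k Q` : "identity" if `P ∧ Q`, zero otherwise. -/
def fiberMap (k : Type) [Field k] (P Q : Prop) : fiber k P →ₗ[k] fiber k Q :=
  if h : P ∧ Q then
    { toFun := fun v => ⟨(v : k), by rw [fiber, if_pos h.2]; exact Submodule.mem_top⟩
      map_add' := fun _ _ => rfl
      map_smul' := fun _ _ => rfl }
  else 0

/-- The zero representation. -/
def zeroRep (k : Type) [Field k] (n : ℕ) (ε : ℕ → Bool) : ARep k n ε where
  V _ := ↥(fiber k False)
  acg _ := by infer_instance
  mod _ := by infer_instance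
  fdim _ := by infer_instance
  triv x _ v := by
    have hfib : fiber k False = ⊥ := if_neg (fun h : False => h.elim)
    obtain ⟨w, hw⟩ := v
    apply Subtype.ext
    have hb : w ∈ (⊥ : Submodule k k) := hfib ▸ hw
    exact (Submodule.mem_bot k).1 hb
  fwd _ := 0
  bwd _ := 0
  fwd_zero _ _ := rfl
  bwd_zero _ _ := rfl

/-- The condition for a vertex `x` to be in the support of the interval representation
`M(i,j)`. -/
def SuppCond (n i j x : ℕ) : Prop := i ≤ x ∧ x ≤ j ∧ 1 ≤ x ∧ x ≤ n + 2

/-- The interval (string) representation `M(i,j)` of `Q`: one dimensional at each vertex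
`x` with `i ≤ x ≤ j`, zero elsewhere, with identity maps on all arrows whose endpoints
both lie in `[i,j]`. -/
def intervalRep (k : Type) [Field k] (n : ℕ) (ε : ℕ → Bool) (i j : ℕ) : ARep k n ε where
  V x := ↥(fiber k (SuppCond n i j x))
  acg _ := by infer_instance
  mod _ := by infer_instance
  fdim _ := by infer_instance
  triv x hx v := by
    have hP : ¬SuppCond n i j x := by simp only [SuppCond]; omega
    have hfib : fiber k (SuppCond n i j x) = ⊥ := if_neg hP
    obtain ⟨w, hw⟩ := v
    apply Subtype.ext
    have hb : w ∈ (⊥ : Submodule k k) := hfib ▸ hw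
    exact (Submodule.mem_bot k).1 hb
  fwd ℓ :=
    if ε ℓ = true then fiberMap k (SuppCond n i j ℓ) (SuppCond n i j (ℓ + 1)) else 0
  bwd ℓ :=
    if ε ℓ = true then 0 else fiberMap k (SuppCond n i j (ℓ + 1)) (SuppCond n i j ℓ)
  fwd_zero ℓ h := by simp [h]
  bwd_zero ℓ h := by simp [h]

/-- Direct sum of a list of representations. -/
def dsumList (k : Type) [Field k] (n : ℕ) (ε : ℕ → Bool) :
    List (ARep k n ε) → ARep k n ε
  | [] => zeroRep k n ε
  | M :: L => M.dsum (dsumList k n ε L)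

/-- Indecomposable representations. -/
def ARep.Indec (M : ARep k n ε) : Prop :=
  ¬M.IsZero ∧ ∀ A B : ARep k n ε, M.Iso (A.dsum B) → A.IsZero ∨ B.IsZero

/-- `A` is a direct summand of `T`. -/
def ARep.IsSummand (A T : ARep k n ε) : Prop := ∃ B : ARep k n ε, T.Iso (A.dsum B)

/-- A representation is basic when it has no repeated indecomposable direct summand. -/
def ARep.Basic (T : ARep k n ε) : Prop :=
  ∀ A : ARep k n ε, A.Indec → ¬(A.dsum A).IsSummand T

/-- A short exact sequence `0 → B → E → A → 0`. -/
structure SES (B A : ARep k n ε) where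
  E : ARep k n ε
  ι : B.Hom E
  π : E.Hom A
  inj : ∀ x, Function.Injective (ι.app x)
  surj : ∀ x, Function.Surjective (π.app x)
  exct : ∀ x (v : E.V x), π.app x v = 0 ↔ ∃ u, ι.app x u = v

/-- A short exact sequence splits. -/
def SES.Splits {B A : ARep k n ε} (σ : SES B A) : Prop :=
  ∃ r : σ.E.Hom B, ∀ x (v : B.V x), r.app x (σ.ι.app x v) = v

/-- `Ext¹(A, B) = 0` : every short exact sequence `0 → B → E → A → 0` splits. -/
def ExtZero (A B : ARep k n ε) : Prop := ∀ σ : SES B A, σ.Splits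

/-- `Ext¹(A,B) ≅ k`, generated by (the class of) a short exact sequence
`0 → B → E → A → 0` with indecomposable middle term `E`: there is a non-split such
sequence `σ` with `σ.E` indecomposable such that every non-split sequence is equivalent
to a nonzero scalar multiple of `σ`. -/
def ExtOneDimIndecMid (A B : ARep k n ε) : Prop :=
  ∃ σ : SES B A, ¬σ.Splits ∧ σ.E.Indec ∧
    ∀ τ : SES B A, ¬τ.Splits → ∃ c : k, c ≠ 0 ∧
      ∃ φ : σ.E.Hom τ.E, (∀ x, Function.Bijective (φ.app x)) ∧
        (∀ x (v : B.V x), φ.app x (σ.ι.app x v) = τ.ι.app x v) ∧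
        (∀ x (v : σ.E.V x), τ.π.app x (φ.app x v) = c • σ.π.app x v)

/-- Almost rigid representations. -/
def AlmostRigid (T : ARep k n ε) : Prop :=
  T.Basic ∧ ∀ A B : ARep k n ε, A.Indec → B.Indec → A.IsSummand T → B.IsSummand T →
    ExtZero A B ∨ ExtOneDimIndecMid A B

/-- Maximal almost rigid representations. -/
def MaxAlmostRigid (T : ARep k n ε) : Prop :=
  AlmostRigid T ∧ ∀ M : ARep k n ε, ¬M.IsZero → ¬AlmostRigid (T.dsum M)

/-- `f` is a section. -/
def ARep.Hom.IsSection {M N : ARep k n ε} (f : M.Hom N) : Prop :=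
  ∃ g : N.Hom M, ∀ x (v : M.V x), g.app x (f.app x v) = v

/-- `f` is a retraction. -/
def ARep.Hom.IsRetraction {M N : ARep k n ε} (f : M.Hom N) : Prop :=
  ∃ g : N.Hom M, ∀ x (v : N.V x), f.app x (g.app x v) = v

/-- Irreducible morphisms: `f` is neither a section nor a retraction, and in every
factorization `f = g ∘ h` either `h` is a section or `g` is a retraction. -/
def ARep.Hom.Irred {M N : ARep k n ε} (f : M.Hom N) : Prop :=
  ¬f.IsSection ∧ ¬f.IsRetraction ∧
    ∀ (Z : ARep k n ε) (h : M.Hom Z) (g : Z.Hom N),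
      (∀ x (v : M.V x), f.app x v = g.app x (h.app x v)) → h.IsSection ∨ g.IsRetraction

/-- Subrepresentations : families of subspaces closed under the structure maps. -/
structure Subrep (M : ARep k n ε) where
  U : ∀ x, Submodule k (M.V x)
  fwd_mem : ∀ i, ∀ v ∈ U i, M.fwd i v ∈ U (i + 1)
  bwd_mem : ∀ i, ∀ v ∈ U (i + 1), M.bwd i v ∈ U i

/-- The central charge `Z(M) = Σ_{x=1}^{n+2} dim_k(M_x) · (p_x − p_{x−1})`. -/
def charge (p : ℕ → ℂ) (M : ARep k n ε) : ℂ :=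
  ∑ x ∈ Finset.Icc 1 (n + 2), (Module.finrank k (M.V x) : ℂ) * (p x - p (x - 1))

/-- The central charge of a subrepresentation. -/
def subCharge (p : ℕ → ℂ) {M : ARep k n ε} (L : Subrep M) : ℂ :=
  ∑ x ∈ Finset.Icc 1 (n + 2), (Module.finrank k (L.U x) : ℂ) * (p x - p (x - 1))

/-- The representation `F(T) = ⊕_{γ(a,b) ∈ T} M(a+1, b)` attached to a collection `T` of
segments of the polygon `P(Q)`. -/
def FRep (k : Type) [Field k] (n : ℕ) (ε : ℕ → Bool) (T : Finset (ℕ × ℕ)) : ARep k n ε :=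
  dsumList k n ε (T.toList.map fun e => intervalRep k n ε (e.1 + 1) e.2)

end CambrianA

namespace CambrianA

/-!
Let `X` be the interval representation of a maximal path. The structure maps of `X` are injective
except at the arrow `a` leaving the path, if there is one, so for indecomposable `B` the space
`Ext¹(X, B)` is the cokernel of the structure map of `B` along `a`. That structure map is surjective
unless `B` vanishes on the source side of `a` and is one-dimensional at its target: otherwise a
suitable projection at the target, adapted to the chain of subspaces which the rest of the
representation cuts out there, would extend to a nontrivial idempotent endomorphism of `B`. In the
exceptional case `X` and `B` have disjoint supports, `Ext¹(X, B)` is one-dimensional, and the middle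
term of the nonsplit extension is indecomposable because `Hom(B, X) = 0`. The dual argument covers
`Ext¹(A, X)`. So adding `X` to a maximal almost rigid `T` not containing it would keep it almost
rigid, and hooks and cohooks are maximal paths.
-/

section LinearAlgebra

theorem exists_isCompl_splitting_chain {α : Type*} [Lattice α] [BoundedOrder α]
    [IsModularLattice α] [ComplementedLattice α] {u w : α} {l : List α}
    (hl : l.Pairwise (· ≤ ·)) (hw : ∀ c ∈ l, w ≤ c) (hwu : Disjoint w u) :
    ∃ w', w ≤ w' ∧ IsCompl w' u ∧ ∀ c ∈ l, c ≤ c ⊓ u ⊔ c ⊓ w' := by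
  induction l generalizing w with
  | nil =>
    obtain ⟨w', hle, hcompl⟩ := hwu.exists_isCompl
    exact ⟨w', hle, hcompl, by simp⟩
  | cons c l ih =>
    obtain ⟨hcl, hl⟩ := List.pairwise_cons.1 hl
    have hwc : w ≤ c := hw c List.mem_cons_self
    obtain ⟨⟨w₁, hw₁c⟩, hww₁, hw₁⟩ :=
      Disjoint.exists_isCompl (a := (⟨w, hwc⟩ : Set.Iic c)) (b := ⟨c ⊓ u, inf_le_left⟩)
        (Set.Iic.disjoint_iff.2 (hwu.mono_right inf_le_right))
    have hdisj : Disjoint w₁ u := by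
      have := Set.Iic.disjoint_iff.1 hw₁.disjoint
      rwa [disjoint_iff, ← inf_assoc, inf_eq_left.2 hw₁c, ← disjoint_iff] at this
    have hsup : w₁ ⊔ c ⊓ u = c := Set.Iic.codisjoint_iff.1 hw₁.codisjoint
    obtain ⟨w', hw₁w', hcompl, hsplit⟩ := ih hl (fun c' hc' => hw₁c.trans (hcl c' hc')) hdisj
    refine ⟨w', le_trans hww₁ hw₁w', hcompl, List.forall_mem_cons.2 ⟨?_, hsplit⟩⟩
    calc c = c ⊓ u ⊔ w₁ := by rw [sup_comm, hsup]
      _ ≤ c ⊓ u ⊔ c ⊓ w' := sup_le_sup_left (le_inf hw₁c hw₁w') _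

variable {k V V' : Type*} [DivisionRing k] [AddCommGroup V] [Module k V]
  [AddCommGroup V'] [Module k V']

/-- An endomorphism is adapted to a list of subspaces if it is an idempotent preserving each of
them. The lists of interest are chains; adapted idempotents can then be transported along any
linear map. -/
def Adapted (l : List (Submodule k V)) (r : Module.End k V) : Prop :=
  IsIdempotentElem r ∧ ∀ C ∈ l, C ∈ Module.End.invtSubmodule r

theorem Adapted.one_sub {l : List (Submodule k V)} {r : Module.End k V} (hr : Adapted l r) :
    Adapted l (1 - r) :=
  ⟨hr.1.one_sub, fun C hC _ hv => C.sub_mem hv (hr.2 C hC hv)⟩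

theorem exists_adapted_range_eq {l : List (Submodule k V)} (hl : l.Pairwise (· ≤ ·))
    (U : Submodule k V) : ∃ r, Adapted l r ∧ LinearMap.range r = U := by
  obtain ⟨W, -, hW, hsplit⟩ :=
    exists_isCompl_splitting_chain hl (fun _ _ => bot_le) (disjoint_bot_left (a := U))
  refine ⟨U.projection W hW.symm, ⟨Submodule.isIdempotentElem_projection _, fun C hC v hv => ?_⟩,
    Submodule.range_projection _⟩
  obtain ⟨x, hx, y, hy, rfl⟩ := Submodule.mem_sup.1 (hsplit C hC hv)
  rw [Submodule.mem_comap, map_add, Submodule.projection_apply_of_mem_left _ hx.2,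
    Submodule.projection_apply_of_mem_right _ hy.2, add_zero]
  exact hx.1

theorem Adapted.apply_apply {l : List (Submodule k V)} {r : Module.End k V} (hr : Adapted l r)
    (v : V) : r (r v) = r v :=
  LinearMap.congr_fun hr.1 v

theorem Adapted.apply_mem {l : List (Submodule k V)} {r : Module.End k V} (hr : Adapted l r)
    {C : Submodule k V} (hC : C ∈ l) {v : V} (hv : v ∈ C) : r v ∈ C :=
  hr.2 C hC hv

theorem Adapted.apply_of_mem_range {l : List (Submodule k V)} {r : Module.End k V}
    (hr : Adapted l r) {v : V} (hv : v ∈ LinearMap.range r) : r v = v := by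
  obtain ⟨w, rfl⟩ := hv
  exact hr.apply_apply w

theorem exists_quasi_inverse (f : V →ₗ[k] V') : ∃ t : V' →ₗ[k] V, ∀ v, f (t (f v)) = f v := by
  obtain ⟨s, hs⟩ := f.rangeRestrict.exists_rightInverse_of_surjective f.range_rangeRestrict
  obtain ⟨t, ht⟩ := s.exists_extend
  refine ⟨t, fun v => ?_⟩
  have htv : t (f v) = s (f.rangeRestrict v) := LinearMap.congr_fun ht (f.rangeRestrict v)
  rw [htv]
  exact congrArg Subtype.val (LinearMap.congr_fun hs (f.rangeRestrict v))

theorem exists_adapted_extending_along (f : V →ₗ[k] V') {l : List (Submodule k V')}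
    (hl : l.Pairwise (· ≤ ·)) {r : Module.End k V}
    (hr : Adapted ((⊥ :: l).map (Submodule.comap f)) r) :
    ∃ φ, Adapted l φ ∧ ∀ v, φ (f v) = f (r v) := by
  obtain ⟨t, ht⟩ := exists_quasi_inverse f
  obtain ⟨p, hp, hp_range⟩ := exists_adapted_range_eq hl (LinearMap.range f)
  have hpf : ∀ v, p (f v) = f v := fun v => hp.apply_of_mem_range (hp_range ▸ ⟨v, rfl⟩)
  have hfr : ∀ v, f (r (t (f v))) = f (r v) := fun v => by
    have hker : r (t (f v) - v) ∈ Submodule.comap f ⊥ :=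
      hr.apply_mem (by simp) (by simp [ht])
    simpa [sub_eq_zero] using hker
  have hφf : ∀ v, (f ∘ₗ r ∘ₗ t ∘ₗ p) (f v) = f (r v) := fun v => by
    simp only [LinearMap.comp_apply, hpf, hfr]
  refine ⟨f ∘ₗ r ∘ₗ t ∘ₗ p, ⟨LinearMap.ext fun v => ?_, fun C hC v hv => ?_⟩, hφf⟩
  · exact (hφf (r (t (p v)))).trans (congrArg f (hr.apply_apply _))
  · obtain ⟨w, hw⟩ : p v ∈ LinearMap.range f := hp_range ▸ ⟨v, rfl⟩
    have hwC : w ∈ Submodule.comap f C := by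
      rw [Submodule.mem_comap, hw]
      exact hp.apply_mem hC hv
    have hrw : f (r w) ∈ C :=
      hr.apply_mem (List.mem_map_of_mem (List.mem_cons_of_mem _ hC)) hwC
    simpa [← hw, hfr] using hrw

theorem exists_adapted_lifting_along (g : V' →ₗ[k] V) {l : List (Submodule k V')}
    (hl : l.Pairwise (· ≤ ·)) {r : Module.End k V}
    (hr : Adapted ((l ++ [⊤]).map (Submodule.map g)) r) :
    ∃ φ, Adapted l φ ∧ ∀ v, g (φ v) = r (g v) := by
  obtain ⟨t, ht⟩ := exists_quasi_inverse g
  obtain ⟨p, hp, hp_range⟩ := exists_adapted_range_eq hl (LinearMap.ker g)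
  have hgp : ∀ v, g (p v) = 0 := fun v =>
    LinearMap.mem_ker.1 (hp_range ▸ LinearMap.mem_range_self p v)
  have hgφ : ∀ v, g (((1 - p) ∘ₗ t ∘ₗ r ∘ₗ g) v) = r (g v) := fun v => by
    obtain ⟨w, -, hw⟩ : r (g v) ∈ Submodule.map g ⊤ :=
      hr.apply_mem (List.mem_map_of_mem (by simp)) (Submodule.mem_map_of_mem trivial)
    simp [← hw, ht, hgp]
  refine ⟨(1 - p) ∘ₗ t ∘ₗ r ∘ₗ g, ⟨LinearMap.ext fun v => ?_, fun C hC v hv => ?_⟩, hgφ⟩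
  · rw [Module.End.mul_apply, LinearMap.comp_apply, LinearMap.comp_apply, LinearMap.comp_apply,
      hgφ, hr.apply_apply]
    rfl
  · obtain ⟨c, hc, hgc⟩ : r (g v) ∈ Submodule.map g C :=
      hr.apply_mem (List.mem_map_of_mem (by simp [hC])) (Submodule.mem_map_of_mem hv)
    have hker : p (t (g c) - c) = t (g c) - c :=
      hp.apply_of_mem_range (hp_range ▸ by simp [ht])
    have hφv : ((1 - p) ∘ₗ t ∘ₗ r ∘ₗ g) v = c - p c := by
      rw [map_sub, sub_eq_sub_iff_sub_eq_sub] at hker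
      simpa [← hgc] using congrArg Neg.neg hker
    rw [Submodule.mem_comap, hφv]
    exact C.sub_mem hc (hp.apply_mem hC hc)

theorem finrank_eq_one_of_forall_submodule (hV : (⊥ : Submodule k V) ≠ ⊤)
    (h : ∀ U : Submodule k V, U = ⊥ ∨ U = ⊤) : Module.finrank k V = 1 :=
  isSimpleModule_iff_finrank_eq_one.1
    ((isSimpleModule_iff k V).2 { exists_pair_ne := ⟨⊥, ⊤, hV⟩, eq_bot_or_eq_top := h })

end LinearAlgebra

section Representations

variable {k : Type} [Field k] {n : ℕ} {ε : ℕ → Bool}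

/-! ### Arrows -/

/-- An arrow of `Q`, joining the vertices `idx` and `idx + 1`; it points to the right iff `dir` is
`true`. Unlike the structure maps `ARep.fwd` and `ARep.bwd`, which are indexed by all of `ℕ`,
these are the arrows actually present in the quiver. -/
structure Arrow (n : ℕ) (ε : ℕ → Bool) where
  idx : ℕ
  dir : Bool
  one_le : 1 ≤ idx
  le : idx ≤ n + 1
  dir_eq : ε idx = dir

namespace Arrow

/-- The source of an arrow. -/
def src : Arrow n ε → ℕ
  | ⟨i, true, _, _, _⟩ => i
  | ⟨i, false, _, _, _⟩ => i + 1

/-- The target of an arrow. -/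
def tgt : Arrow n ε → ℕ
  | ⟨i, true, _, _, _⟩ => i + 1
  | ⟨i, false, _, _, _⟩ => i

/-- The vertices on the same side of an arrow as its source: removing the arrow cuts the line
into `srcSide` and its complement. An arrow points away from the vertex `r` iff
`r ∈ a.srcSide`. -/
def srcSide (a : Arrow n ε) : Set ℕ := {x | x ≤ a.idx ↔ a.dir = true}

theorem eq_of_idx_eq : ∀ {a b : Arrow n ε}, a.idx = b.idx → a = b
  | ⟨_, _, _, _, rfl⟩, ⟨_, _, _, _, rfl⟩, rfl => rfl

theorem src_mem_srcSide (a : Arrow n ε) : a.src ∈ a.srcSide := by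
  rcases a with ⟨i, _ | _, -, -, -⟩ <;> simp [srcSide, src]

theorem tgt_notMem_srcSide (a : Arrow n ε) : a.tgt ∉ a.srcSide := by
  rcases a with ⟨i, _ | _, -, -, -⟩ <;> simp [srcSide, tgt]

theorem src_eq_or_tgt_eq (a : Arrow n ε) :
    a.src = a.idx ∧ a.tgt = a.idx + 1 ∨ a.src = a.idx + 1 ∧ a.tgt = a.idx := by
  rcases a with ⟨i, _ | _, -, -, -⟩ <;> simp [src, tgt]

theorem src_ne_tgt (a : Arrow n ε) : a.src ≠ a.tgt := by
  rcases a.src_eq_or_tgt_eq with ⟨hs, ht⟩ | ⟨hs, ht⟩ <;> omega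

theorem src_mem_srcSide_iff {a b : Arrow n ε} (hba : b ≠ a) :
    b.src ∈ a.srcSide ↔ (b.idx < a.idx ↔ a.dir = true) := by
  have hidx : b.idx ≠ a.idx := fun h => hba (eq_of_idx_eq h)
  have hle : b.src ≤ a.idx ↔ b.idx < a.idx := by
    rcases b.src_eq_or_tgt_eq with ⟨hs, -⟩ | ⟨hs, -⟩ <;> omega
  rw [srcSide, Set.mem_ofPred_eq, hle]

theorem tgt_mem_srcSide_iff {a b : Arrow n ε} (hba : b ≠ a) :
    b.tgt ∈ a.srcSide ↔ (b.idx < a.idx ↔ a.dir = true) := by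
  have hidx : b.idx ≠ a.idx := fun h => hba (eq_of_idx_eq h)
  have hle : b.tgt ≤ a.idx ↔ b.idx < a.idx := by
    rcases b.src_eq_or_tgt_eq with ⟨-, ht⟩ | ⟨-, ht⟩ <;> omega
  rw [srcSide, Set.mem_ofPred_eq, hle]

theorem src_mem_srcSide_iff_tgt_mem {a b : Arrow n ε} (hba : b ≠ a) :
    b.src ∈ a.srcSide ↔ b.tgt ∈ a.srcSide :=
  (src_mem_srcSide_iff hba).trans (tgt_mem_srcSide_iff hba).symm

end Arrow

/-- The structure map of a representation along an arrow. -/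
def ARep.arr (M : ARep k n ε) : ∀ a : Arrow n ε, M.V a.src →ₗ[k] M.V a.tgt
  | ⟨i, true, _, _, _⟩ => M.fwd i
  | ⟨i, false, _, _, _⟩ => M.bwd i

theorem ARep.Hom.comm_arr {M N : ARep k n ε} (f : M.Hom N) :
    ∀ (a : Arrow n ε) (v : M.V a.src), f.app a.tgt (M.arr a v) = N.arr a (f.app a.src v)
  | ⟨i, true, _, _, _⟩, v => f.comm_fwd i v
  | ⟨i, false, _, _, _⟩, v => f.comm_bwd i v

/-- A family of linear maps commuting with the structure maps of the arrows of `Q` is a morphism: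
the structure maps with other indices vanish. -/
def ARep.Hom.ofArr {M N : ARep k n ε} (app : ∀ x, M.V x →ₗ[k] N.V x)
    (comm : ∀ (a : Arrow n ε) v, app a.tgt (M.arr a v) = N.arr a (app a.src v)) : M.Hom N where
  app := app
  comm_fwd i v := by
    cases hε : ε i with
    | false => simp [M.fwd_zero i hε, N.fwd_zero i hε]
    | true =>
      by_cases hi : 1 ≤ i ∧ i ≤ n + 1
      · exact comm ⟨i, true, hi.1, hi.2, hε⟩ v
      · obtain h | h : (i = 0 ∨ n + 2 < i) ∨ (i + 1 = 0 ∨ n + 2 < i + 1) := by omega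
        · simp [M.triv i h v]
        · rw [N.triv _ h (N.fwd i _), N.triv _ h (app _ _)]
  comm_bwd i v := by
    cases hε : ε i with
    | true => simp [M.bwd_zero i hε, N.bwd_zero i hε]
    | false =>
      by_cases hi : 1 ≤ i ∧ i ≤ n + 1
      · exact comm ⟨i, false, hi.1, hi.2, hε⟩ v
      · obtain h | h : (i = 0 ∨ n + 2 < i) ∨ (i + 1 = 0 ∨ n + 2 < i + 1) := by omega
        · rw [N.triv _ h (N.bwd i _), N.triv _ h (app _ _)]
        · simp [M.triv _ h v]

/-- The representation with given structure maps along the arrows of `Q`. -/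
def ARep.ofArr (V : ℕ → Type) [∀ x, AddCommGroup (V x)] [∀ x, Module k (V x)]
    [∀ x, FiniteDimensional k (V x)] (triv : ∀ x, x = 0 ∨ n + 2 < x → ∀ v : V x, v = 0)
    (φ : ∀ a : Arrow n ε, V a.src →ₗ[k] V a.tgt) : ARep k n ε where
  V := V
  triv := triv
  fwd i := if h : (1 ≤ i ∧ i ≤ n + 1) ∧ ε i = true then φ ⟨i, true, h.1.1, h.1.2, h.2⟩ else 0
  bwd i := if h : (1 ≤ i ∧ i ≤ n + 1) ∧ ε i = false then φ ⟨i, false, h.1.1, h.1.2, h.2⟩ else 0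
  fwd_zero i h := by simp [h]
  bwd_zero i h := by simp [h]

theorem ARep.arr_ofArr (V : ℕ → Type) [∀ x, AddCommGroup (V x)] [∀ x, Module k (V x)]
    [∀ x, FiniteDimensional k (V x)] (triv : ∀ x, x = 0 ∨ n + 2 < x → ∀ v : V x, v = 0)
    (φ : ∀ a : Arrow n ε, V a.src →ₗ[k] V a.tgt) :
    ∀ a, (ARep.ofArr V triv φ).arr a = φ a
  | ⟨_, true, h₁, h₂, h₃⟩ => dif_pos ⟨⟨h₁, h₂⟩, h₃⟩
  | ⟨_, false, h₁, h₂, h₃⟩ => dif_pos ⟨⟨h₁, h₂⟩, h₃⟩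

/-! ### Direct summands -/

namespace ARep

variable {M N A X T : ARep k n ε}

theorem arr_dsum : ∀ (a : Arrow n ε) (v : (M.dsum N).V a.src),
    (M.dsum N).arr a v = (M.arr a v.1, N.arr a v.2)
  | ⟨_, true, _, _, _⟩, _ => rfl
  | ⟨_, false, _, _, _⟩, _ => rfl

/-- The inclusion of the first summand. -/
def Hom.inl (M N : ARep k n ε) : M.Hom (M.dsum N) where
  app _ := LinearMap.inl k _ _
  comm_fwd i _ := Prod.ext rfl (map_zero (N.fwd i)).symm
  comm_bwd i _ := Prod.ext rfl (map_zero (N.bwd i)).symm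

/-- The inclusion of the second summand. -/
def Hom.inr (M N : ARep k n ε) : N.Hom (M.dsum N) where
  app _ := LinearMap.inr k _ _
  comm_fwd i _ := Prod.ext (map_zero (M.fwd i)).symm rfl
  comm_bwd i _ := Prod.ext (map_zero (M.bwd i)).symm rfl

/-- The projection onto the first summand. -/
def Hom.fst (M N : ARep k n ε) : (M.dsum N).Hom M where
  app _ := LinearMap.fst k _ _
  comm_fwd _ _ := rfl
  comm_bwd _ _ := rfl

/-- The projection onto the second summand. -/
def Hom.snd (M N : ARep k n ε) : (M.dsum N).Hom N where
  app _ := LinearMap.snd k _ _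
  comm_fwd _ _ := rfl
  comm_bwd _ _ := rfl

/-- The endomorphism `1 - e`. -/
def Hom.oneSub (e : M.Hom M) : M.Hom M :=
  .ofArr (fun x => 1 - e.app x) fun a v => by simp [e.comm_arr]

/-- The kernel of a morphism. -/
def ker (w : M.Hom N) : ARep k n ε :=
  .ofArr (fun x => LinearMap.ker (w.app x)) (fun x hx v => Subtype.ext (M.triv x hx v))
    fun a => (M.arr a).restrict fun v hv => by
      rw [LinearMap.mem_ker] at hv ⊢
      rw [w.comm_arr, hv, map_zero]

theorem coe_arr_ker (w : M.Hom N) (a : Arrow n ε) (v : (ker w).V a.src) :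
    Subtype.val ((ker w).arr a v) = M.arr a (Subtype.val v) :=
  congrArg Subtype.val (LinearMap.congr_fun (arr_ofArr _ _ _ a) v)

/-- The inclusion of the kernel of a morphism. -/
def kerι (w : M.Hom N) : (ker w).Hom M :=
  .ofArr (fun x => (LinearMap.ker (w.app x)).subtype) (coe_arr_ker w)

/-- The factorization through the kernel of `w` of a morphism annihilated by `w`. -/
def kerLift (w : M.Hom N) (f : A.Hom M) (h : ∀ x v, w.app x (f.app x v) = 0) : A.Hom (ker w) :=
  .ofArr (fun x => (f.app x).codRestrict _ (h x)) fun a v =>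
    Subtype.ext ((f.comm_arr a v).trans (coe_arr_ker w a ⟨f.app a.src v, h _ v⟩).symm)

/-- The inverse of a bijective morphism. -/
def Hom.inv (f : M.Hom N) (hf : ∀ x, Function.Bijective (f.app x)) : N.Hom M :=
  .ofArr (fun x => (LinearEquiv.ofBijective (f.app x) (hf x)).symm) fun a v => by
    apply (hf _).1
    simp [f.comm_arr]

theorem Hom.app_inv (f : M.Hom N) (hf : ∀ x, Function.Bijective (f.app x)) (x : ℕ) (v : N.V x) :
    f.app x ((f.inv hf).app x v) = v :=
  (LinearEquiv.ofBijective (f.app x) (hf x)).apply_symm_apply v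

theorem iso_dsum_ker {u : A.Hom T} {w : T.Hom A} (h : ∀ x v, w.app x (u.app x v) = v) :
    T.Iso (A.dsum (ker w)) := by
  let p : T.Hom (ker w) := kerLift w (u.comp w).oneSub fun x v => by
    change w.app x (v - u.app x (w.app x v)) = 0
    rw [map_sub, h, sub_self]
  have hp : ∀ x v, Subtype.val (p.app x v) = v - u.app x (w.app x v) := fun _ _ => rfl
  refine ⟨.ofArr (fun x => (w.app x).prod (p.app x)) fun a v => by
      rw [arr_dsum]
      exact Prod.ext (w.comm_arr a v) (p.comm_arr a v),
    fun x => ⟨fun v v' hv => ?_, ?_⟩⟩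
  · have hw : w.app x v = w.app x v' := congrArg Prod.fst hv
    have hvv : Subtype.val (p.app x v) = Subtype.val (p.app x v') :=
      congrArg (fun z => Subtype.val (Prod.snd z)) hv
    rwa [hp, hp, hw, sub_left_inj] at hvv
  · rintro ⟨a, b, hb⟩
    rw [LinearMap.mem_ker] at hb
    have hwab : w.app x (u.app x a + b) = a := by rw [map_add, h, hb, add_zero]
    refine ⟨u.app x a + b, Prod.ext hwab (Subtype.ext ?_)⟩
    exact (hp x _).trans (by rw [hwab, add_sub_cancel_left])

theorem isSummand_iff : A.IsSummand T ↔
    ∃ (u : A.Hom T) (w : T.Hom A), ∀ x v, w.app x (u.app x v) = v := by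
  constructor
  · rintro ⟨B, f, hf⟩
    exact ⟨(f.inv hf).comp (.inl A B), (Hom.fst A B).comp f, fun x v =>
      congrArg Prod.fst (f.app_inv hf x _)⟩
  · rintro ⟨u, w, h⟩
    exact ⟨ker w, iso_dsum_ker h⟩

theorem IsSummand.trans (hMN : M.IsSummand N) (hNT : N.IsSummand T) : M.IsSummand T := by
  obtain ⟨u, w, h⟩ := isSummand_iff.1 hMN
  obtain ⟨u', w', h'⟩ := isSummand_iff.1 hNT
  refine isSummand_iff.2 ⟨u'.comp u, w.comp w', fun x v => ?_⟩
  change w.app x (w'.app x (u'.app x (u.app x v))) = v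
  rw [h', h]

theorem Indec.iso_of_isSummand (hA : A.Indec) (hX : ¬X.IsZero) (h : X.IsSummand A) : A.Iso X := by
  obtain ⟨B, f, hf⟩ := h
  have hB : B.IsZero := (hA.2 X B ⟨f, hf⟩).resolve_left hX
  refine ⟨(Hom.fst X B).comp f, fun x => ⟨fun v v' hv => (hf x).1 ?_, fun v => ?_⟩⟩
  · exact Prod.ext hv ((hB x _).trans (hB x _).symm)
  · obtain ⟨v', hv'⟩ := (hf x).2 (v, 0)
    exact ⟨v', congrArg Prod.fst hv'⟩

theorem Indec.eq_zero_or_eq_id_of_idempotent (hA : A.Indec) (e : A.Hom A)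
    (he : ∀ x v, e.app x (e.app x v) = e.app x v) :
    (∀ x v, e.app x v = 0) ∨ ∀ x v, e.app x v = v := by
  have hmem : ∀ x v, e.oneSub.app x (e.app x v) = 0 := fun x v => by
    change e.app x v - e.app x (e.app x v) = 0
    rw [he, sub_self]
  let u : (ker e.oneSub).Hom A := kerι e.oneSub
  let w : A.Hom (ker e.oneSub) := kerLift e.oneSub e hmem
  have hwu : ∀ x v, w.app x (u.app x v) = v := fun x v =>
    Subtype.ext (sub_eq_zero.1 v.2).symm
  refine (hA.2 _ _ (iso_dsum_ker hwu)).imp (fun h x v => ?_) fun h x v => ?_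
  · exact congrArg Subtype.val (h x ⟨e.app x v, hmem x v⟩)
  · have hker : v - e.app x v ∈ LinearMap.ker (w.app x) := Subtype.ext (by
      change e.app x (v - e.app x v) = 0
      rw [map_sub, he, sub_self])
    exact (sub_eq_zero.1 (congrArg Subtype.val (h x ⟨_, hker⟩))).symm

theorem indec_of_idempotent (h₀ : ¬M.IsZero)
    (h : ∀ e : M.Hom M, (∀ x v, e.app x (e.app x v) = e.app x v) →
      (∀ x v, e.app x v = 0) ∨ ∀ x v, e.app x v = v) : M.Indec := by
  refine ⟨h₀, ?_⟩
  rintro A B ⟨f, hf⟩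
  let e : M.Hom M := ((f.inv hf).comp (.inl A B)).comp ((Hom.fst A B).comp f)
  have hfe : ∀ x v, f.app x (e.app x v) = ((f.app x v).1, 0) := fun x v => f.app_inv hf x _
  have he : ∀ x v, e.app x (e.app x v) = e.app x v := fun x v =>
    (hf x).1 (by rw [hfe, hfe])
  refine (h e he).imp (fun h₀ x a => ?_) fun h₁ x b => ?_
  · obtain ⟨v, hv⟩ := (hf x).2 (a, 0)
    have hv0 := hfe x v
    rw [h₀, map_zero, hv] at hv0
    exact (congrArg Prod.fst hv0).symm
  · obtain ⟨v, hv⟩ := (hf x).2 (0, b)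
    have hv0 := hfe x v
    rw [h₁, hv] at hv0
    exact congrArg Prod.snd hv0

end ARep

/-! ### Bricks as direct summands -/

namespace ARep

variable {M N M' N' D X T : ARep k n ε}

/-- The direct sum of two morphisms. -/
def Hom.map (f : M.Hom M') (g : N.Hom N') : (M.dsum N).Hom (M'.dsum N') where
  app x := (f.app x).prodMap (g.app x)
  comm_fwd i v := Prod.ext (f.comm_fwd i v.1) (g.comm_fwd i v.2)
  comm_bwd i v := Prod.ext (f.comm_bwd i v.1) (g.comm_bwd i v.2)

theorem IsSummand.dsum (h : M.IsSummand M') (h' : N.IsSummand N') :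
    (M.dsum N).IsSummand (M'.dsum N') := by
  obtain ⟨u, w, hwu⟩ := isSummand_iff.1 h
  obtain ⟨u', w', hwu'⟩ := isSummand_iff.1 h'
  exact isSummand_iff.2 ⟨.map u u', .map w w', fun x v => Prod.ext (hwu x v.1) (hwu' x v.2)⟩

/-- A brick: a nonzero representation all of whose endomorphisms are scalars. -/
def Brick (X : ARep k n ε) : Prop :=
  ¬X.IsZero ∧ ∀ f : X.Hom X, ∃ c : k, ∀ x v, f.app x v = c • v

theorem Brick.comp_eq_zero_or_isSummand (hX : X.Brick) (u : X.Hom T) (w : T.Hom X) :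
    (∀ x v, w.app x (u.app x v) = 0) ∨ X.IsSummand T := by
  obtain ⟨c, hc⟩ := hX.2 (w.comp u)
  have hc : ∀ x v, w.app x (u.app x v) = c • v := hc
  rcases eq_or_ne c 0 with rfl | hc₀
  · exact Or.inl fun x v => by rw [hc, zero_smul]
  · refine Or.inr (isSummand_iff.2 ⟨u, .smul c⁻¹ w, fun x v => ?_⟩)
    change c⁻¹ • w.app x (u.app x v) = v
    rw [hc, inv_smul_smul₀ hc₀]

theorem app_eq_inl_add_inr (w : (M.dsum N).Hom D) (x : ℕ) (v : (M.dsum N).V x) :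
    w.app x v = (w.comp (.inl M N)).app x v.1 + (w.comp (.inr M N)).app x v.2 := by
  refine Eq.trans (congrArg (w.app x) ?_) (map_add (w.app x) _ _)
  exact Prod.ext (add_zero v.1).symm (zero_add v.2).symm

theorem Brick.isSummand_or_isSummand_of_dsum (hX : X.Brick) (h : X.IsSummand (M.dsum N)) :
    X.IsSummand M ∨ X.IsSummand N := by
  obtain ⟨u, w, hwu⟩ := isSummand_iff.1 h
  by_contra! hMN
  have hM := (hX.comp_eq_zero_or_isSummand ((Hom.fst M N).comp u) (w.comp (.inl M N))).resolve_right
    hMN.1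
  have hN := (hX.comp_eq_zero_or_isSummand ((Hom.snd M N).comp u) (w.comp (.inr M N))).resolve_right
    hMN.2
  refine hX.1 fun x v => ?_
  rw [← hwu x v, app_eq_inl_add_inr]
  exact (congrArg₂ (· + ·) (hM x v) (hN x v)).trans (add_zero 0)

theorem Brick.isSummand_of_dsum_or_isSummand (hX : X.Brick) (h : D.IsSummand (T.dsum X)) :
    D.IsSummand T ∨ X.IsSummand D := by
  obtain ⟨u, w, hwu⟩ := isSummand_iff.1 h
  let uT : D.Hom T := (Hom.fst T X).comp u
  let uX : D.Hom X := (Hom.snd T X).comp u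
  let wT : T.Hom D := w.comp (.inl T X)
  let wX : X.Hom D := w.comp (.inr T X)
  refine (hX.comp_eq_zero_or_isSummand wX uX).imp_left fun hzero => ?_
  have hsum : ∀ x v, wT.app x (uT.app x v) + wX.app x (uX.app x v) = v := fun x v =>
    (app_eq_inl_add_inr w x _).symm.trans (hwu x v)
  -- `wT uT = 1 - N` with `N = wX uX` of square zero, so `1 + N` inverts it.
  refine isSummand_iff.2 ⟨uT.comp ((Hom.id D).add (wX.comp uX)), wT, fun x v => ?_⟩
  change wT.app x (uT.app x (v + wX.app x (uX.app x v))) = v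
  rw [eq_sub_of_add_eq (hsum x _), map_add (uX.app x), hzero, add_zero, add_sub_cancel_right]

theorem Brick.not_dsum_self_isSummand (hX : X.Brick) (hXT : ¬X.IsSummand T) :
    ¬(X.dsum X).IsSummand (T.dsum X) := by
  intro h
  obtain ⟨u, w, hwu⟩ := isSummand_iff.1 h
  let uX : (X.dsum X).Hom X := (Hom.snd T X).comp u
  let wX : X.Hom (X.dsum X) := w.comp (.inr T X)
  have hcomp : ∀ (i : X.Hom (X.dsum X)) (p : (X.dsum X).Hom X) x v,
      p.app x (i.app x v) = p.app x (wX.app x (uX.app x (i.app x v))) := fun i p x v => by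
    have hzero := (hX.comp_eq_zero_or_isSummand ((Hom.fst T X).comp (u.comp i))
      (p.comp (w.comp (.inl T X)))).resolve_right hXT x v
    calc p.app x (i.app x v) = (p.comp w).app x (u.app x (i.app x v)) :=
          congrArg (p.app x) (hwu x _).symm
      _ = _ := (app_eq_inl_add_inr (p.comp w) x _).trans
          ((congrArg (· + _) hzero).trans (zero_add _))
  obtain ⟨a, ha⟩ := hX.2 (uX.comp (.inl X X))
  obtain ⟨b, hb⟩ := hX.2 (uX.comp (.inr X X))
  obtain ⟨c, hc⟩ := hX.2 ((Hom.fst X X).comp wX)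
  obtain ⟨d, hd⟩ := hX.2 ((Hom.snd X X).comp wX)
  refine hX.1 fun x v => ?_
  have hca : v = c • a • v := by
    rw [← ha, ← hc]; exact hcomp (.inl X X) (.fst X X) x v
  have hcb : 0 = c • b • v := by
    rw [← hb, ← hc]; exact hcomp (.inr X X) (.fst X X) x v
  have hdb : v = d • b • v := by
    rw [← hb, ← hd]; exact hcomp (.inr X X) (.snd X X) x v
  rcases smul_eq_zero.1 hcb.symm with rfl | hbv
  · rwa [zero_smul] at hca
  · rwa [hbv, smul_zero] at hdb

theorem Basic.dsum_brick (hT : T.Basic) (hX : X.Brick) (hXT : ¬X.IsSummand T) :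
    (T.dsum X).Basic := by
  intro A hA hAA
  rcases hX.isSummand_of_dsum_or_isSummand hAA with hAT | hXA
  · exact hT A hA hAT
  · have hXA : X.IsSummand A := (hX.isSummand_or_isSummand_of_dsum hXA).elim _root_.id _root_.id
    exact hX.not_dsum_self_isSummand hXT ((hXA.dsum hXA).trans hAA)

end ARep

/-! ### Indecomposable representations along an arrow -/

namespace ARep

variable {M : ARep k n ε}

/-- The family `ψ` commutes with the structure map of the arrow `a`. -/
def CommutesAt (M : ARep k n ε) (ψ : ∀ x, Module.End k (M.V x)) (a : Arrow n ε) : Prop :=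
  ∀ v, ψ a.tgt (M.arr a v) = M.arr a (ψ a.src v)

theorem Indec.eq_one_or_eq_zero_of_commutesAt (hM : M.Indec) {s : Set ℕ}
    [∀ x, Decidable (x ∈ s)] {a : Arrow n ε} {ψ : ∀ x, Module.End k (M.V x)}
    (hψ : ∀ x, IsIdempotentElem (ψ x))
    (hs : ∀ b ≠ a, b.src ∈ s ↔ b.tgt ∈ s) (hcomm : ∀ b ≠ a, b.src ∈ s → M.CommutesAt ψ b)
    (ha : M.CommutesAt (s.piecewise ψ 1) a) :
    (∀ x ∈ s, ψ x = 1) ∨ (∀ x ∈ s, ψ x = 0) ∧ ∀ x ∉ s, Subsingleton (M.V x) := by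
  let e : M.Hom M := .ofArr (s.piecewise ψ 1) fun b v => by
    rcases eq_or_ne b a with rfl | hba
    · exact ha v
    · by_cases hb : b.src ∈ s
      · rw [Set.piecewise_eq_of_mem _ _ _ hb, Set.piecewise_eq_of_mem _ _ _ ((hs b hba).1 hb)]
        exact hcomm b hba hb v
      · rw [Set.piecewise_eq_of_notMem _ _ _ hb,
          Set.piecewise_eq_of_notMem _ _ _ (mt (hs b hba).2 hb)]
        rfl
  have he_in : ∀ x ∈ s, e.app x = ψ x := fun x hx => Set.piecewise_eq_of_mem _ _ _ hx
  have he_out : ∀ x ∉ s, e.app x = 1 := fun x hx => Set.piecewise_eq_of_notMem _ _ _ hx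
  have he : ∀ x v, e.app x (e.app x v) = e.app x v := fun x v => by
    by_cases hx : x ∈ s
    · rw [he_in x hx]
      exact LinearMap.congr_fun (hψ x) v
    · rw [he_out x hx, Module.End.one_apply]
  refine (hM.eq_zero_or_eq_id_of_idempotent e he).symm.imp (fun h x hx => ?_)
    fun h => ⟨fun x hx => ?_, fun x hx => ?_⟩
  · exact he_in x hx ▸ LinearMap.ext (h x)
  · exact he_in x hx ▸ LinearMap.ext (h x)
  · refine ⟨fun v v' => ?_⟩
    have h₀ : ∀ v : M.V x, v = 0 := fun v => by simpa [he_out x hx] using h x v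
    rw [h₀ v, h₀ v']

/-- There is a chain of subspaces at the vertex `x` such that every adapted idempotent at `x`
extends to a family of idempotents commuting with the arrows in `S`. -/
def HasAdaptedChain (M : ARep k n ε) (S : Set (Arrow n ε)) (x : ℕ) : Prop :=
  ∃ l : List (Submodule k (M.V x)), l.Pairwise (· ≤ ·) ∧ ∀ r, Adapted l r →
    ∃ ψ : ∀ y, Module.End k (M.V y), ψ x = r ∧ (∀ y, IsIdempotentElem (ψ y)) ∧
      ∀ a ∈ S, M.CommutesAt ψ a

theorem HasAdaptedChain.mono {S S' : Set (Arrow n ε)} {x : ℕ} (h : M.HasAdaptedChain S x)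
    (hS : S' ⊆ S) : M.HasAdaptedChain S' x := by
  obtain ⟨l, hl, hext⟩ := h
  refine ⟨l, hl, fun r hr => ?_⟩
  obtain ⟨ψ, hx, hidem, hcomm⟩ := hext r hr
  exact ⟨ψ, hx, hidem, fun a ha => hcomm a (hS ha)⟩

theorem hasAdaptedChain_empty (M : ARep k n ε) (x : ℕ) : M.HasAdaptedChain ∅ x := by
  refine ⟨[], List.Pairwise.nil, fun r hr => ⟨Function.update 0 x r, ?_, fun y => ?_, by simp⟩⟩
  · rw [Function.update_self]
  · rcases eq_or_ne y x with rfl | hy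
    · rw [Function.update_self]
      exact hr.1
    · rw [Function.update_of_ne hy]
      exact IsIdempotentElem.zero

theorem exists_update_commutesAt {S : Set (Arrow n ε)} {x y : ℕ} {a : Arrow n ε} (hxy : x ≠ y)
    (hS : ∀ b ∈ S, b.src ≠ y ∧ b.tgt ≠ y) {ψ : ∀ z, Module.End k (M.V z)}
    (hψ : ∀ z, IsIdempotentElem (ψ z)) (hcomm : ∀ b ∈ S, M.CommutesAt ψ b)
    {r : Module.End k (M.V y)} (hr : IsIdempotentElem r)
    (ha : ∀ ψ' : ∀ z, Module.End k (M.V z), ψ' y = r → ψ' x = ψ x → M.CommutesAt ψ' a) :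
    ∃ ψ' : ∀ z, Module.End k (M.V z), ψ' y = r ∧ (∀ z, IsIdempotentElem (ψ' z)) ∧
      ∀ b ∈ insert a S, M.CommutesAt ψ' b := by
  have hy : Function.update ψ y r y = r := Function.update_self _ _ _
  refine ⟨Function.update ψ y r, hy, fun z => ?_,
    Set.forall_mem_insert.2 ⟨ha _ hy (Function.update_of_ne hxy _ _), fun b hb v => ?_⟩⟩
  · rcases eq_or_ne z y with rfl | hz
    · rwa [hy]
    · rw [Function.update_of_ne hz]
      exact hψ z
  · rw [Function.update_of_ne (hS b hb).1, Function.update_of_ne (hS b hb).2]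
    exact hcomm b hb v

theorem HasAdaptedChain.insert_src {S : Set (Arrow n ε)} {a : Arrow n ε}
    (h : M.HasAdaptedChain S a.tgt) (hS : ∀ b ∈ S, b.src ≠ a.src ∧ b.tgt ≠ a.src) :
    M.HasAdaptedChain (insert a S) a.src := by
  obtain ⟨l, hl, hext⟩ := h
  refine ⟨(⊥ :: l).map (Submodule.comap (M.arr a)), List.Pairwise.map _
    (fun _ _ h => Submodule.comap_mono h) (List.pairwise_cons.2 ⟨fun _ _ => bot_le, hl⟩),
    fun r hr => ?_⟩
  obtain ⟨φ, hφ, hφr⟩ := exists_adapted_extending_along (M.arr a) hl hr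
  obtain ⟨ψ, rfl, hψ, hcomm⟩ := hext φ hφ
  refine exists_update_commutesAt a.src_ne_tgt.symm hS hψ hcomm hr.1 fun ψ' hsrc htgt v => ?_
  rw [hsrc, htgt, hφr]

theorem HasAdaptedChain.insert_tgt {S : Set (Arrow n ε)} {a : Arrow n ε}
    (h : M.HasAdaptedChain S a.src) (hS : ∀ b ∈ S, b.src ≠ a.tgt ∧ b.tgt ≠ a.tgt) :
    M.HasAdaptedChain (insert a S) a.tgt := by
  obtain ⟨l, hl, hext⟩ := h
  refine ⟨(l ++ [⊤]).map (Submodule.map (M.arr a)), List.Pairwise.map _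
    (fun _ _ h => Submodule.map_mono h) (List.pairwise_append.2 ⟨hl, List.pairwise_singleton _ _,
      fun _ _ C hC => List.mem_singleton.1 hC ▸ le_top⟩), fun r hr => ?_⟩
  obtain ⟨φ, hφ, hφr⟩ := exists_adapted_lifting_along (M.arr a) hl hr
  obtain ⟨ψ, rfl, hψ, hcomm⟩ := hext φ hφ
  refine exists_update_commutesAt a.src_ne_tgt hS hψ hcomm hr.1 fun ψ' htgt hsrc v => ?_
  rw [hsrc, htgt, hφr]

theorem HasAdaptedChain.insert {S : Set (Arrow n ε)} {a : Arrow n ε} {x y : ℕ}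
    (h : M.HasAdaptedChain S x) (hxy : a.src = y ∧ a.tgt = x ∨ a.src = x ∧ a.tgt = y)
    (hS : ∀ b ∈ S, b.src ≠ y ∧ b.tgt ≠ y) : M.HasAdaptedChain (insert a S) y := by
  rcases hxy with ⟨rfl, rfl⟩ | ⟨rfl, rfl⟩
  · exact h.insert_src hS
  · exact h.insert_tgt hS

theorem hasAdaptedChain_left (M : ARep k n ε) {p : ℕ} (hp : 1 ≤ p) (hpn : p ≤ n + 2) :
    M.HasAdaptedChain {a | a.idx < p} p := by
  induction p, hp using Nat.le_induction with
  | base => exact (M.hasAdaptedChain_empty 1).mono fun a ha => absurd a.one_le (not_le.2 ha)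
  | succ p hp ih =>
    let a : Arrow n ε := ⟨p, ε p, hp, by omega, rfl⟩
    refine ((ih (by omega)).insert (a := a) (y := p + 1) a.src_eq_or_tgt_eq.symm
      fun b (hb : b.idx < p) => ?_).mono fun b (hb : b.idx < p + 1) => ?_
    · rcases b.src_eq_or_tgt_eq with ⟨hs, ht⟩ | ⟨hs, ht⟩ <;> omega
    · exact (Nat.lt_succ_iff_lt_or_eq.1 hb).elim Or.inr fun h => Or.inl (Arrow.eq_of_idx_eq h)

theorem hasAdaptedChain_right (M : ARep k n ε) {p : ℕ} (hp : 1 ≤ p) (hpn : p ≤ n + 2) :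
    M.HasAdaptedChain {a | p ≤ a.idx} p := by
  induction hpn using Nat.decreasingInduction with
  | self =>
    exact (M.hasAdaptedChain_empty (n + 2)).mono fun a (ha : n + 2 ≤ a.idx) =>
      absurd a.le (by omega)
  | of_succ p hpn ih =>
    let a : Arrow n ε := ⟨p, ε p, hp, by omega, rfl⟩
    refine ((ih (by omega)).insert (a := a) (y := p) a.src_eq_or_tgt_eq
      fun b (hb : p + 1 ≤ b.idx) => ?_).mono fun b (hb : p ≤ b.idx) => ?_
    · rcases b.src_eq_or_tgt_eq with ⟨hs, ht⟩ | ⟨hs, ht⟩ <;> omega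
    · exact hb.lt_or_eq.elim Or.inr fun h => Or.inl (Arrow.eq_of_idx_eq h.symm)

theorem hasAdaptedChain_src (M : ARep k n ε) : ∀ a : Arrow n ε,
    M.HasAdaptedChain {b | b ≠ a ∧ b.src ∈ a.srcSide} a.src
  | ⟨_, true, h₁, h₂, _⟩ => (M.hasAdaptedChain_left h₁ (by omega)).mono
      fun _ ⟨hba, hb⟩ => ((Arrow.src_mem_srcSide_iff hba).1 hb).2 rfl
  | ⟨i, false, _, h₂, _⟩ => (M.hasAdaptedChain_right (p := i + 1) (by omega) (by omega)).mono
      fun _ ⟨hba, hb⟩ => lt_of_le_of_ne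
        (not_lt.1 fun h => Bool.false_ne_true (((Arrow.src_mem_srcSide_iff hba).1 hb).1 h))
        fun h => hba (Arrow.eq_of_idx_eq h.symm)

theorem hasAdaptedChain_tgt (M : ARep k n ε) : ∀ a : Arrow n ε,
    M.HasAdaptedChain {b | b ≠ a ∧ b.src ∉ a.srcSide} a.tgt
  | ⟨i, true, _, h₂, _⟩ => (M.hasAdaptedChain_right (p := i + 1) (by omega) (by omega)).mono
      fun _ ⟨hba, hb⟩ => lt_of_le_of_ne
        (not_lt.1 fun h => hb ((Arrow.src_mem_srcSide_iff hba).2 (iff_of_true h rfl)))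
        fun h => hba (Arrow.eq_of_idx_eq h.symm)
  | ⟨_, false, h₁, h₂, _⟩ => (M.hasAdaptedChain_left h₁ (by omega)).mono
      fun _ ⟨hba, hb⟩ => not_le.1 fun h => hb ((Arrow.src_mem_srcSide_iff hba).2
        (iff_of_false (not_lt.2 h) Bool.false_ne_true))

theorem Indec.eq_top_or_eq_bot_of_range_le (hM : M.Indec) {a : Arrow n ε}
    {U : Submodule k (M.V a.tgt)} (hU : LinearMap.range (M.arr a) ≤ U) :
    U = ⊤ ∨ U = ⊥ ∧ ∀ x ∈ a.srcSide, Subsingleton (M.V x) := by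
  obtain ⟨l, hl, hext⟩ := M.hasAdaptedChain_tgt a
  obtain ⟨r, hr, rfl⟩ := exists_adapted_range_eq hl U
  obtain ⟨ψ, rfl, hψ, hcomm⟩ := hext r hr
  have ha : M.CommutesAt (a.srcSideᶜ.piecewise ψ 1) a := fun v => by
    rw [Set.piecewise_eq_of_mem _ _ _ a.tgt_notMem_srcSide,
      Set.piecewise_eq_of_notMem _ _ _ (not_not.2 a.src_mem_srcSide)]
    exact hr.apply_of_mem_range (hU ⟨v, rfl⟩)
  refine (hM.eq_one_or_eq_zero_of_commutesAt (s := a.srcSideᶜ) hψ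
    (fun b hba => not_congr (Arrow.src_mem_srcSide_iff_tgt_mem hba))
    (fun b hba hb => hcomm b ⟨hba, hb⟩) ha).imp (fun h => ?_) fun ⟨h, hout⟩ =>
      ⟨?_, fun x hx => hout x (not_not.2 hx)⟩
  · rw [h _ a.tgt_notMem_srcSide, Module.End.one_eq_id, LinearMap.range_id]
  · rw [h _ a.tgt_notMem_srcSide, LinearMap.range_zero]

theorem Indec.eq_bot_or_eq_top_of_le_ker (hM : M.Indec) {a : Arrow n ε}
    {U : Submodule k (M.V a.src)} (hU : U ≤ LinearMap.ker (M.arr a)) :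
    U = ⊥ ∨ U = ⊤ ∧ ∀ x ∉ a.srcSide, Subsingleton (M.V x) := by
  obtain ⟨l, hl, hext⟩ := M.hasAdaptedChain_src a
  obtain ⟨r, hr, rfl⟩ := exists_adapted_range_eq hl U
  obtain ⟨ψ, hψr, hψ, hcomm⟩ := hext (1 - r) hr.one_sub
  have ha : M.CommutesAt (a.srcSide.piecewise ψ 1) a := fun v => by
    have hker : M.arr a (r v) = 0 := hU ⟨v, rfl⟩
    rw [Set.piecewise_eq_of_notMem _ _ _ a.tgt_notMem_srcSide,
      Set.piecewise_eq_of_mem _ _ _ a.src_mem_srcSide, hψr]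
    simp [hker]
  refine (hM.eq_one_or_eq_zero_of_commutesAt hψ
    (fun b hba => Arrow.src_mem_srcSide_iff_tgt_mem hba)
    (fun b hba hb => hcomm b ⟨hba, hb⟩) ha).imp (fun h => ?_) fun ⟨h, hout⟩ => ⟨?_, hout⟩
  · rw [sub_eq_self.1 (hψr.symm.trans (h _ a.src_mem_srcSide)), LinearMap.range_zero]
  · rw [← sub_eq_zero.1 (hψr.symm.trans (h _ a.src_mem_srcSide)), Module.End.one_eq_id,
      LinearMap.range_id]

theorem Indec.surjective_arr_or (hM : M.Indec) (a : Arrow n ε) :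
    Function.Surjective (M.arr a) ∨
      (∀ x ∈ a.srcSide, Subsingleton (M.V x)) ∧ Module.finrank k (M.V a.tgt) = 1 := by
  refine or_iff_not_imp_left.2 fun hsurj => ?_
  rw [← LinearMap.range_eq_top] at hsurj
  obtain ⟨hrange, hout⟩ := (hM.eq_top_or_eq_bot_of_range_le le_rfl).resolve_left hsurj
  rw [hrange] at hsurj
  refine ⟨hout, finrank_eq_one_of_forall_submodule hsurj fun U => ?_⟩
  exact (hM.eq_top_or_eq_bot_of_range_le (hrange ▸ bot_le)).symm.imp_left And.left

theorem Indec.injective_arr_or (hM : M.Indec) (a : Arrow n ε) :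
    Function.Injective (M.arr a) ∨
      (∀ x ∉ a.srcSide, Subsingleton (M.V x)) ∧ Module.finrank k (M.V a.src) = 1 := by
  refine or_iff_not_imp_left.2 fun hinj => ?_
  rw [← LinearMap.ker_eq_bot] at hinj
  obtain ⟨hker, hout⟩ := (hM.eq_bot_or_eq_top_of_le_ker le_rfl).resolve_left hinj
  rw [hker] at hinj
  refine ⟨hout, finrank_eq_one_of_forall_submodule (Ne.symm hinj) fun U => ?_⟩
  exact (hM.eq_bot_or_eq_top_of_le_ker (hker ▸ le_top)).imp_right And.left

end ARep

/-! ### Extensions -/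

namespace SES

variable {A B L : ARep k n ε}

theorem π_ι_eq_zero (σ : SES B A) (x : ℕ) (u : B.V x) : σ.π.app x (σ.ι.app x u) = 0 :=
  (σ.exct x _).2 ⟨u, rfl⟩

theorem exists_lift (σ : SES B A) (f : L.Hom σ.E) (hf : ∀ x v, σ.π.app x (f.app x v) = 0) :
    ∃ g : L.Hom B, ∀ x v, σ.ι.app x (g.app x v) = f.app x v := by
  choose l hl using fun x =>
    (σ.ι.app x).exists_leftInverse_of_injective (LinearMap.ker_eq_bot.2 (σ.inj x))
  have hlift : ∀ x v, σ.ι.app x (l x (f.app x v)) = f.app x v := fun x v => by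
    obtain ⟨u, hu⟩ := (σ.exct x _).1 (hf x v)
    rw [← hu]
    exact congrArg _ (LinearMap.congr_fun (hl x) u)
  refine ⟨.ofArr (fun x => l x ∘ₗ f.app x) fun a v => σ.inj _ ?_, hlift⟩
  rw [σ.ι.comm_arr, LinearMap.comp_apply, LinearMap.comp_apply, hlift, hlift, f.comm_arr]

theorem exists_desc (σ : SES B A) (f : σ.E.Hom L) (hf : ∀ x u, f.app x (σ.ι.app x u) = 0) :
    ∃ g : A.Hom L, ∀ x v, g.app x (σ.π.app x v) = f.app x v := by
  choose s hs using fun x =>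
    (σ.π.app x).exists_rightInverse_of_surjective (LinearMap.range_eq_top.2 (σ.surj x))
  have hdesc : ∀ x v, f.app x (s x (σ.π.app x v)) = f.app x v := fun x v => by
    obtain ⟨u, hu⟩ := (σ.exct x (s x (σ.π.app x v) - v)).1 (by
      rw [map_sub, sub_eq_zero]
      exact LinearMap.congr_fun (hs x) _)
    rw [← sub_eq_zero, ← map_sub, ← hu, hf]
  refine ⟨.ofArr (fun x => f.app x ∘ₗ s x) fun a v => ?_, hdesc⟩
  obtain ⟨w, rfl⟩ := σ.surj _ v
  rw [← σ.π.comm_arr, LinearMap.comp_apply, LinearMap.comp_apply, hdesc, hdesc, f.comm_arr]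

theorem splits_of_section (σ : SES B A) (s : A.Hom σ.E) (hs : ∀ x v, σ.π.app x (s.app x v) = v) :
    σ.Splits := by
  obtain ⟨r, hr⟩ := σ.exists_lift (s.comp σ.π).oneSub fun x v => by
    change σ.π.app x (v - s.app x (σ.π.app x v)) = 0
    rw [map_sub, hs, sub_self]
  refine ⟨r, fun x u => σ.inj x ((hr x _).trans ?_)⟩
  change σ.ι.app x u - s.app x (σ.π.app x (σ.ι.app x u)) = σ.ι.app x u
  rw [π_ι_eq_zero, map_zero, sub_zero]

theorem indec_E (σ : SES B A) (hA : A.Indec) (hB : B.Indec)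
    (hBA : ∀ (f : B.Hom A) x v, f.app x v = 0) (hσ : ¬σ.Splits) : σ.E.Indec := by
  refine ARep.indec_of_idempotent (fun hE => hB.1 fun x u => σ.inj x ?_) fun e he => ?_
  · exact (hE x _).trans (map_zero (σ.ι.app x)).symm
  obtain ⟨eB, heB⟩ := σ.exists_lift (e.comp σ.ι) (hBA (σ.π.comp (e.comp σ.ι)))
  obtain ⟨eA, heA⟩ := σ.exists_desc (σ.π.comp e) (hBA (σ.π.comp (e.comp σ.ι)))
  have heB : ∀ x u, σ.ι.app x (eB.app x u) = e.app x (σ.ι.app x u) := heB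
  have heA : ∀ x v, eA.app x (σ.π.app x v) = σ.π.app x (e.app x v) := heA
  have hB' := hB.eq_zero_or_eq_id_of_idempotent eB fun x u => σ.inj x (by rw [heB, heB, he])
  have hA' := hA.eq_zero_or_eq_id_of_idempotent eA fun x a => by
    obtain ⟨v, rfl⟩ := σ.surj x a
    rw [heA, heA, he]
  rcases hB' with hB₀ | hB₁ <;> rcases hA' with hA₀ | hA₁
  · left
    intro x v
    obtain ⟨u, hu⟩ := (σ.exct x (e.app x v)).1 (by rw [← heA, hA₀])
    rw [← he, ← hu, ← heB, hB₀, map_zero]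
  · obtain ⟨s, hs⟩ := σ.exists_desc e fun x u => by rw [← heB, hB₀, map_zero]
    refine absurd (σ.splits_of_section s fun x a => ?_) hσ
    obtain ⟨v, rfl⟩ := σ.surj x a
    rw [hs, ← heA, hA₁]
  · obtain ⟨r, hr⟩ := σ.exists_lift e fun x v => by rw [← heA, hA₀]
    exact absurd ⟨r, fun x u => σ.inj x (by rw [hr, ← heB, hB₁])⟩ hσ
  · right
    intro x v
    obtain ⟨u, hu⟩ := (σ.exct x (e.app x v - v)).1 (by rw [map_sub, ← heA, hA₁, sub_self])
    rw [← sub_eq_zero, ← hu, ← hB₁ x u, heB, hu, map_sub, he, sub_self]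

end SES

section Cocycles

variable {A B : ARep k n ε}

/-- The coboundary of a family `h` of linear maps. Families `δ` of linear maps
`A.V a.src →ₗ[k] B.V a.tgt` are the 1-cocycles: they parametrize the extensions of `A` by `B`,
and two of them give equivalent extensions iff they differ by a coboundary. -/
def cobdry (h : ∀ x, A.V x →ₗ[k] B.V x) (a : Arrow n ε) : A.V a.src →ₗ[k] B.V a.tgt :=
  h a.tgt ∘ₗ A.arr a - B.arr a ∘ₗ h a.src

theorem cobdry_apply (h : ∀ x, A.V x →ₗ[k] B.V x) (a : Arrow n ε) (v : A.V a.src) :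
    cobdry h a v = h a.tgt (A.arr a v) - B.arr a (h a.src v) :=
  rfl

/-- The middle term of the extension of `A` by `B` with cocycle `δ`. -/
def cocycleRep (δ : ∀ a : Arrow n ε, A.V a.src →ₗ[k] B.V a.tgt) : ARep k n ε :=
  .ofArr (fun x => B.V x × A.V x) (fun x hx v => Prod.ext (B.triv x hx v.1) (A.triv x hx v.2))
    fun a => ((B.arr a).coprod (δ a)).prod (A.arr a ∘ₗ LinearMap.snd k _ _)

theorem arr_cocycleRep (δ : ∀ a : Arrow n ε, A.V a.src →ₗ[k] B.V a.tgt) (a : Arrow n ε)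
    (v : (cocycleRep δ).V a.src) :
    (cocycleRep δ).arr a v = (B.arr a v.1 + δ a v.2, A.arr a v.2) :=
  LinearMap.congr_fun (ARep.arr_ofArr _ _ _ a) v

/-- The cocycle `δ` of the extension `τ` with respect to the linear sections `s` of `τ.π`. -/
structure SES.IsCocycle (τ : SES B A) (s : ∀ x, A.V x →ₗ[k] τ.E.V x)
    (δ : ∀ a : Arrow n ε, A.V a.src →ₗ[k] B.V a.tgt) : Prop where
  π_section : ∀ x v, τ.π.app x (s x v) = v
  arr_section : ∀ a v, τ.E.arr a (s a.src v) = s a.tgt (A.arr a v) + τ.ι.app a.tgt (δ a v)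

namespace SES

theorem exists_isCocycle (τ : SES B A) : ∃ s δ, τ.IsCocycle s δ := by
  choose s hs using fun x =>
    (τ.π.app x).exists_rightInverse_of_surjective (LinearMap.range_eq_top.2 (τ.surj x))
  choose l hl using fun x =>
    (τ.ι.app x).exists_leftInverse_of_injective (LinearMap.ker_eq_bot.2 (τ.inj x))
  have hπs : ∀ x v, τ.π.app x (s x v) = v := fun x => LinearMap.congr_fun (hs x)
  refine ⟨s, fun a => l a.tgt ∘ₗ (τ.E.arr a ∘ₗ s a.src - s a.tgt ∘ₗ A.arr a), hπs, fun a v => ?_⟩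
  obtain ⟨u, hu⟩ := (τ.exct a.tgt (τ.E.arr a (s a.src v) - s a.tgt (A.arr a v))).1 (by
    rw [map_sub, τ.π.comm_arr, hπs, hπs, sub_self])
  have hlu : l a.tgt (τ.E.arr a (s a.src v) - s a.tgt (A.arr a v)) = u := by
    rw [← hu]
    exact LinearMap.congr_fun (hl _) u
  rw [LinearMap.comp_apply, LinearMap.sub_apply, LinearMap.comp_apply, LinearMap.comp_apply, hlu,
    hu, add_sub_cancel]

variable {τ : SES B A} {s : ∀ x, A.V x →ₗ[k] τ.E.V x}
  {δ : ∀ a : Arrow n ε, A.V a.src →ₗ[k] B.V a.tgt}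

theorem IsCocycle.sub_cobdry {h : ∀ x, A.V x →ₗ[k] B.V x} (hs : τ.IsCocycle s (δ + cobdry h)) :
    τ.IsCocycle (fun x => s x + τ.ι.app x ∘ₗ h x) δ where
  π_section x v := by
    rw [LinearMap.add_apply, map_add, hs.π_section, LinearMap.comp_apply, π_ι_eq_zero, add_zero]
  arr_section a v := by
    simp only [LinearMap.add_apply, LinearMap.comp_apply, map_add, hs.arr_section, Pi.add_apply,
      cobdry_apply, map_sub, τ.ι.comm_arr]
    abel

theorem IsCocycle.splits (hs : τ.IsCocycle s 0) : τ.Splits :=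
  τ.splits_of_section (.ofArr s fun a v => by simp [hs.arr_section]) hs.π_section

theorem IsCocycle.exists_eq_cobdry (hs : τ.IsCocycle s δ) (hτ : τ.Splits) :
    ∃ h, δ = cobdry h := by
  obtain ⟨r, hr⟩ := hτ
  refine ⟨fun x => -(r.app x ∘ₗ s x), funext fun a => LinearMap.ext fun v => ?_⟩
  have harr := congrArg (r.app a.tgt) (hs.arr_section a v)
  rw [r.comm_arr, map_add, hr] at harr
  simp [cobdry_apply, harr]

/-- The extension of `A` by `B` with cocycle `δ`. -/
def ofCocycle (δ : ∀ a : Arrow n ε, A.V a.src →ₗ[k] B.V a.tgt) : SES B A where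
  E := cocycleRep δ
  ι := .ofArr (fun x => LinearMap.inl k _ _) fun a v => by
    refine ((arr_cocycleRep δ a (v, 0)).trans (Prod.ext ?_ (map_zero (A.arr a)))).symm
    exact (congrArg (B.arr a v + ·) (map_zero (δ a))).trans (add_zero _)
  π := .ofArr (fun x => LinearMap.snd k _ _) fun a v => congrArg Prod.snd (arr_cocycleRep δ a v)
  inj _ := LinearMap.inl_injective
  surj _ := LinearMap.snd_surjective
  exct _ v := ⟨fun hv => ⟨v.1, Prod.ext rfl hv.symm⟩, fun ⟨_, hu⟩ => congrArg Prod.snd hu.symm⟩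

theorem isCocycle_ofCocycle (δ : ∀ a : Arrow n ε, A.V a.src →ₗ[k] B.V a.tgt) :
    (ofCocycle δ).IsCocycle (fun _ => LinearMap.inr k _ _) δ where
  π_section _ _ := rfl
  arr_section a v := by
    refine (arr_cocycleRep δ a (0, v)).trans (Prod.ext ?_ (add_zero _).symm)
    exact congrArg (· + δ a v) (map_zero (B.arr a))

theorem IsCocycle.exists_hom_ofCocycle {c : k} (hc : c ≠ 0) (hs : τ.IsCocycle s (c • δ)) :
    ∃ φ : (ofCocycle δ).E.Hom τ.E, (∀ x, Function.Bijective (φ.app x)) ∧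
      (∀ x v, φ.app x ((ofCocycle δ).ι.app x v) = τ.ι.app x v) ∧
      ∀ x v, τ.π.app x (φ.app x v) = c⁻¹ • (ofCocycle δ).π.app x v := by
  let φ : ∀ x, B.V x × A.V x →ₗ[k] τ.E.V x := fun x => (τ.ι.app x).coprod (c⁻¹ • s x)
  have hφ : ∀ x v, φ x v = τ.ι.app x v.1 + c⁻¹ • s x v.2 := fun x v => rfl
  have hcomm : ∀ (a : Arrow n ε) (v : B.V a.src × A.V a.src),
      φ a.tgt (B.arr a v.1 + δ a v.2, A.arr a v.2) = τ.E.arr a (φ a.src v) := fun a v => by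
    rw [hφ, hφ, map_add, map_add, map_smul, ← τ.ι.comm_arr, hs.arr_section, Pi.smul_apply,
      LinearMap.smul_apply, map_smul, smul_add, inv_smul_smul₀ hc]
    abel
  have hπφ : ∀ x v, τ.π.app x (φ x v) = c⁻¹ • v.2 := fun x v => by
    rw [hφ, map_add, π_ι_eq_zero, zero_add, map_smul, hs.π_section]
  refine ⟨.ofArr φ fun a v => ?_, fun x => ⟨?_, fun e => ?_⟩, fun x v => ?_, hπφ⟩
  · exact (congrArg (φ a.tgt) (arr_cocycleRep δ a v)).trans (hcomm a v)
  · refine (injective_iff_map_eq_zero (φ x)).2 fun v hv => ?_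
    have hv₂ : v.2 = 0 := by
      have := hπφ x v
      rwa [hv, map_zero, eq_comm, smul_eq_zero_iff_right (inv_ne_zero hc)] at this
    have hv₁ : τ.ι.app x v.1 = 0 := by
      have := hφ x v
      rwa [hv, hv₂, map_zero, smul_zero, add_zero, eq_comm] at this
    exact Prod.ext (τ.inj x (hv₁.trans (map_zero _).symm)) hv₂
  · obtain ⟨u, hu⟩ := (τ.exct x (e - s x (τ.π.app x e))).1 (by
      rw [map_sub, hs.π_section, sub_self])
    refine ⟨(u, c • τ.π.app x e), (hφ x _).trans ?_⟩
    rw [hu, map_smul, inv_smul_smul₀ hc, sub_add_cancel]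
  · refine (hφ x (v, 0)).trans ?_
    rw [map_zero, smul_zero, add_zero]

end SES

theorem extZero_of_forall_exists_eq_cobdry
    (h : ∀ δ : ∀ a : Arrow n ε, A.V a.src →ₗ[k] B.V a.tgt, ∃ h, δ = cobdry h) : ExtZero A B := by
  intro σ
  obtain ⟨s, δ, hs⟩ := σ.exists_isCocycle
  obtain ⟨h, rfl⟩ := h δ
  rw [← zero_add (cobdry h)] at hs
  exact hs.sub_cobdry.splits

theorem extOneDimIndecMid_of_cocycle {δ₀ : ∀ a : Arrow n ε, A.V a.src →ₗ[k] B.V a.tgt}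
    (hδ₀ : ∀ h, δ₀ ≠ cobdry h) (hspan : ∀ δ, ∃ (c : k) (h : _), δ = c • δ₀ + cobdry h)
    (hindec : ∀ τ : SES B A, ¬τ.Splits → τ.E.Indec) : ExtOneDimIndecMid A B := by
  have hsplit : ¬(SES.ofCocycle δ₀).Splits := fun h => by
    obtain ⟨h, hh⟩ := (SES.isCocycle_ofCocycle δ₀).exists_eq_cobdry h
    exact hδ₀ h hh
  refine ⟨.ofCocycle δ₀, hsplit, hindec _ hsplit, fun τ hτ => ?_⟩
  obtain ⟨s, δ, hs⟩ := τ.exists_isCocycle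
  obtain ⟨c, h, rfl⟩ := hspan δ
  have hs' := hs.sub_cobdry
  rcases eq_or_ne c 0 with rfl | hc
  · rw [zero_smul] at hs'
    exact absurd hs'.splits hτ
  · exact ⟨c⁻¹, inv_ne_zero hc, hs'.exists_hom_ofCocycle hc⟩

theorem extOneDimIndecMid_of_arrow (hA : A.Indec) (hB : B.Indec)
    (hdisj : ∀ x, Subsingleton (A.V x) ∨ Subsingleton (B.V x)) (a : Arrow n ε)
    (hAa : Module.finrank k (A.V a.src) = 1) (hBa : Module.finrank k (B.V a.tgt) = 1)
    (h : ∀ δ : ∀ a : Arrow n ε, A.V a.src →ₗ[k] B.V a.tgt,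
      ∃ h, ∀ b ≠ a, δ b = cobdry h b) : ExtOneDimIndecMid A B := by
  have hcobdry : ∀ h : ∀ x, A.V x →ₗ[k] B.V x, cobdry h = 0 := fun h => by
    have hh : h = 0 := funext fun x => LinearMap.ext fun v => by
      rcases hdisj x with hx | hx
      · rw [Subsingleton.elim v 0, map_zero, map_zero]
      · exact Subsingleton.elim _ _
    subst hh
    funext b
    exact LinearMap.ext fun v => by simp [cobdry_apply]
  obtain ⟨d, hd, hspan⟩ := finrank_eq_one_iff'.1
    (show Module.finrank k (A.V a.src →ₗ[k] B.V a.tgt) = 1 by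
      rw [Module.finrank_linearMap, hAa, hBa])
  refine extOneDimIndecMid_of_cocycle (δ₀ := Pi.single a d) (fun h h₀ => hd ?_) (fun δ => ?_)
    fun τ hτ => τ.indec_E hA hB (fun f x v => ?_) hτ
  · rw [hcobdry, Pi.single_eq_zero_iff] at h₀
    exact h₀
  · obtain ⟨h, hh⟩ := h δ
    obtain ⟨c, hc⟩ := hspan (δ a)
    refine ⟨c, h, funext fun b => ?_⟩
    rw [hcobdry, add_zero, Pi.smul_apply]
    rcases eq_or_ne b a with rfl | hb
    · rw [Pi.single_eq_same, hc]
    · rw [Pi.single_eq_of_ne hb, smul_zero, hh b hb, hcobdry, Pi.zero_apply]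
  · rcases hdisj x with hx | hx
    · exact Subsingleton.elim _ _
    · rw [Subsingleton.elim v 0, map_zero]

end Cocycles

/-! ### Solving the coboundary equation -/

theorem exists_sequence_of_succ_of_pred {H : ℕ → Type*} [∀ i, Nonempty (H i)]
    (E : ∀ i, H i → H (i + 1) → Prop) (r : ℕ) (succ : ∀ i, r ≤ i → ∀ x, ∃ y, E i x y)
    (pred : ∀ i < r, ∀ y, ∃ x, E i x y) : ∃ h : ∀ i, H i, ∀ i, E i (h i) (h (i + 1)) := by
  induction r generalizing H with
  | zero =>
    choose f hf using fun i => succ i i.zero_le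
    exact ⟨Nat.rec (Classical.arbitrary _) f, fun i => hf i _⟩
  | succ r ih =>
    obtain ⟨h, hh⟩ := ih (H := fun i => H (i + 1)) (fun i => E (i + 1))
      (fun i hi => succ (i + 1) (Nat.succ_le_succ hi))
      fun i hi => pred (i + 1) (Nat.succ_lt_succ hi)
    obtain ⟨x, hx⟩ := pred 0 r.succ_pos (h 0)
    exact ⟨fun i => Nat.casesOn i x h, fun i => Nat.casesOn i hx hh⟩

theorem Arrow.exists_forall_src_tgt {H : ℕ → Type*} [∀ i, Nonempty (H i)]
    (Φ : ∀ a : Arrow n ε, H a.src → H a.tgt → Prop) (r : ℕ)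
    (away : ∀ a : Arrow n ε, r ∈ a.srcSide → ∀ x, ∃ y, Φ a x y)
    (toward : ∀ a : Arrow n ε, r ∉ a.srcSide → ∀ y, ∃ x, Φ a x y) :
    ∃ h : ∀ i, H i, ∀ a : Arrow n ε, Φ a (h a.src) (h a.tgt) := by
  obtain ⟨h, hh⟩ := exists_sequence_of_succ_of_pred (H := H)
    (fun i x y => (∀ h₁ h₂ hε, Φ ⟨i, true, h₁, h₂, hε⟩ x y) ∧
      ∀ h₁ h₂ hε, Φ ⟨i, false, h₁, h₂, hε⟩ y x) r
    (fun i hi x => by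
      by_cases hi' : ∃ a : Arrow n ε, a.idx = i
      · obtain ⟨⟨i, _ | _, h₁, h₂, hε⟩, rfl⟩ := hi'
        · obtain ⟨y, hy⟩ := toward ⟨i, false, h₁, h₂, hε⟩ (by simpa [srcSide] using hi) x
          exact ⟨y, fun _ _ h => by simp [hε] at h, fun _ _ _ => hy⟩
        · obtain ⟨y, hy⟩ := away ⟨i, true, h₁, h₂, hε⟩ (by simpa [srcSide] using hi) x
          exact ⟨y, fun _ _ _ => hy, fun _ _ h => by simp [hε] at h⟩
      · exact ⟨Classical.arbitrary _, fun h₁ h₂ hε => absurd ⟨⟨i, true, h₁, h₂, hε⟩, rfl⟩ hi',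
          fun h₁ h₂ hε => absurd ⟨⟨i, false, h₁, h₂, hε⟩, rfl⟩ hi'⟩)
    (fun i hi y => by
      by_cases hi' : ∃ a : Arrow n ε, a.idx = i
      · obtain ⟨⟨i, _ | _, h₁, h₂, hε⟩, rfl⟩ := hi'
        · obtain ⟨x, hx⟩ := away ⟨i, false, h₁, h₂, hε⟩ (by simpa [srcSide] using hi) y
          exact ⟨x, fun _ _ h => by simp [hε] at h, fun _ _ _ => hx⟩
        · obtain ⟨x, hx⟩ := toward ⟨i, true, h₁, h₂, hε⟩ (by simpa [srcSide] using hi) y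
          exact ⟨x, fun _ _ _ => hx, fun _ _ h => by simp [hε] at h⟩
      · exact ⟨Classical.arbitrary _, fun h₁ h₂ hε => absurd ⟨⟨i, true, h₁, h₂, hε⟩, rfl⟩ hi',
          fun h₁ h₂ hε => absurd ⟨⟨i, false, h₁, h₂, hε⟩, rfl⟩ hi'⟩)
  exact ⟨h, fun
    | ⟨i, true, _, _, _⟩ => (hh i).1 _ _ _
    | ⟨i, false, _, _, _⟩ => (hh i).2 _ _ _⟩

theorem exists_cobdry_eq {A B : ARep k n ε} (S : Set (Arrow n ε)) (r : ℕ)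
    (away : ∀ a ∈ S, r ∈ a.srcSide → Function.Injective (A.arr a) ∨ Subsingleton (B.V a.tgt))
    (toward : ∀ a ∈ S, r ∉ a.srcSide → Function.Surjective (B.arr a) ∨ Subsingleton (A.V a.src))
    (δ : ∀ a : Arrow n ε, A.V a.src →ₗ[k] B.V a.tgt) : ∃ h, ∀ a ∈ S, δ a = cobdry h a := by
  refine Arrow.exists_forall_src_tgt (H := fun x => A.V x →ₗ[k] B.V x)
    (fun a x y => a ∈ S → δ a = y ∘ₗ A.arr a - B.arr a ∘ₗ x) r (fun a hr x => ?_) fun a hr y => ?_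
  · by_cases ha : a ∈ S
    · rcases away a ha hr with hinj | hsub
      · obtain ⟨l, hl⟩ := (A.arr a).exists_leftInverse_of_injective (LinearMap.ker_eq_bot.2 hinj)
        refine ⟨(δ a + B.arr a ∘ₗ x) ∘ₗ l, fun _ => ?_⟩
        rw [LinearMap.comp_assoc, hl, LinearMap.comp_id, add_sub_cancel_right]
      · exact ⟨0, fun _ => LinearMap.ext fun _ => Subsingleton.elim _ _⟩
    · exact ⟨0, fun h => absurd h ha⟩
  · by_cases ha : a ∈ S
    · rcases toward a ha hr with hsurj | hsub
      · obtain ⟨s, hs⟩ :=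
          (B.arr a).exists_rightInverse_of_surjective (LinearMap.range_eq_top.2 hsurj)
        refine ⟨s ∘ₗ (y ∘ₗ A.arr a - δ a), fun _ => ?_⟩
        rw [← LinearMap.comp_assoc, hs, LinearMap.id_comp, sub_sub_cancel]
      · exact ⟨0, fun _ => LinearMap.ext fun v => by
          rw [Subsingleton.elim v 0, map_zero, map_zero]⟩
    · exact ⟨0, fun h => absurd h ha⟩

/-! ### Representations with a single exit or a single entry -/

namespace ARep

variable {A B X : ARep k n ε}

/-- `X` can be left only through one arrow, ending at `r`. On all other arrows the equation
`δ = cobdry h` with source `X` can be solved for `h`, by working outwards from `r` along arrows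
pointing away from `r` and along arrows with zero source. -/
structure HasSoleExit (X : ARep k n ε) (r : ℕ) : Prop where
  injective : ∀ a : Arrow n ε, r ∈ a.srcSide → Function.Injective (X.arr a)
  subsingleton_or : ∀ a : Arrow n ε, r ∉ a.srcSide → Subsingleton (X.V a.src) ∨
    a.tgt = r ∧ (∀ x ∉ a.srcSide, Subsingleton (X.V x)) ∧ Module.finrank k (X.V a.src) = 1

/-- `X` can be entered only through one arrow, starting at `r`; dual to `ARep.HasSoleExit`. -/
structure HasSoleEntry (X : ARep k n ε) (r : ℕ) : Prop where
  surjective : ∀ a : Arrow n ε, r ∉ a.srcSide → Function.Surjective (X.arr a)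
  subsingleton_or : ∀ a : Arrow n ε, r ∈ a.srcSide → Subsingleton (X.V a.tgt) ∨
    a.src = r ∧ (∀ x ∈ a.srcSide, Subsingleton (X.V x)) ∧ Module.finrank k (X.V a.tgt) = 1

theorem HasSoleExit.extZero_or_extOneDimIndecMid {r : ℕ} (hX : X.HasSoleExit r) (hXi : X.Indec)
    (hB : B.Indec) : ExtZero X B ∨ ExtOneDimIndecMid X B := by
  by_cases hsurj : ∀ a : Arrow n ε, r ∉ a.srcSide →
      Function.Surjective (B.arr a) ∨ Subsingleton (X.V a.src)
  · refine .inl (extZero_of_forall_exists_eq_cobdry fun δ => ?_)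
    obtain ⟨h, hh⟩ := exists_cobdry_eq Set.univ r (fun a _ ha => .inl (hX.injective a ha))
      (fun a _ => hsurj a) δ
    exact ⟨h, funext fun a => hh a trivial⟩
  push Not at hsurj
  obtain ⟨a, har, hBa, hXa⟩ := hsurj
  obtain ⟨rfl, hXoff, hX₁⟩ := (hX.subsingleton_or a har).resolve_left
    (not_subsingleton_iff_nontrivial.2 hXa)
  obtain ⟨hBoff, hB₁⟩ := (hB.surjective_arr_or a).resolve_left hBa
  refine .inr (extOneDimIndecMid_of_arrow hXi hB (fun x => ?_) a hX₁ hB₁ fun δ => ?_)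
  · by_cases hx : x ∈ a.srcSide
    · exact .inr (hBoff x hx)
    · exact .inl (hXoff x hx)
  · refine exists_cobdry_eq {b | b ≠ a} a.tgt (fun b _ hb => .inl (hX.injective b hb))
      (fun b hba hb => .inr ((hX.subsingleton_or b hb).resolve_right fun ⟨_, hoff, _⟩ => ?_)) δ
    have ha : a.src ∉ b.srcSide := mt (Arrow.src_mem_srcSide_iff_tgt_mem (Ne.symm hba)).1 hb
    exact not_subsingleton_iff_nontrivial.2 hXa (hoff a.src ha)

theorem HasSoleEntry.extZero_or_extOneDimIndecMid {r : ℕ} (hX : X.HasSoleEntry r) (hXi : X.Indec)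
    (hA : A.Indec) : ExtZero A X ∨ ExtOneDimIndecMid A X := by
  by_cases hinj : ∀ a : Arrow n ε, r ∈ a.srcSide →
      Function.Injective (A.arr a) ∨ Subsingleton (X.V a.tgt)
  · refine .inl (extZero_of_forall_exists_eq_cobdry fun δ => ?_)
    obtain ⟨h, hh⟩ := exists_cobdry_eq Set.univ r (fun a _ => hinj a)
      (fun a _ ha => .inl (hX.surjective a ha)) δ
    exact ⟨h, funext fun a => hh a trivial⟩
  push Not at hinj
  obtain ⟨a, har, hAa, hXa⟩ := hinj
  obtain ⟨rfl, hXoff, hX₁⟩ := (hX.subsingleton_or a har).resolve_left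
    (not_subsingleton_iff_nontrivial.2 hXa)
  obtain ⟨hAoff, hA₁⟩ := (hA.injective_arr_or a).resolve_left hAa
  refine .inr (extOneDimIndecMid_of_arrow hA hXi (fun x => ?_) a hA₁ hX₁ fun δ => ?_)
  · by_cases hx : x ∈ a.srcSide
    · exact .inr (hXoff x hx)
    · exact .inl (hAoff x hx)
  · refine exists_cobdry_eq {b | b ≠ a} a.src
      (fun b hba hb => .inr ((hX.subsingleton_or b hb).resolve_right fun ⟨_, hoff, _⟩ => ?_))
      (fun b _ hb => .inl (hX.surjective b hb)) δ
    have ha : a.tgt ∈ b.srcSide := (Arrow.src_mem_srcSide_iff_tgt_mem (Ne.symm hba)).1 hb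
    exact not_subsingleton_iff_nontrivial.2 hXa (hoff a.tgt ha)

end ARep

/-! ### Intervals and maximal paths -/

namespace ARep

variable {M X : ARep k n ε} {lo hi : ℕ}

/-- `X` is isomorphic to the interval representation supported on `Set.Icc lo hi`. This is
expressed through dimensions and bijectivity, so that it is visibly invariant under isomorphism. -/
structure IsInterval (X : ARep k n ε) (lo hi : ℕ) : Prop where
  one_le : 1 ≤ lo
  lo_le : lo ≤ hi
  le : hi ≤ n + 2
  subsingleton : ∀ x ∉ Set.Icc lo hi, Subsingleton (X.V x)
  finrank_eq_one : ∀ x ∈ Set.Icc lo hi, Module.finrank k (X.V x) = 1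
  bijective : ∀ a : Arrow n ε, a.src ∈ Set.Icc lo hi → a.tgt ∈ Set.Icc lo hi →
    Function.Bijective (X.arr a)

theorem IsInterval.of_iso (hX : X.IsInterval lo hi) (h : M.Iso X) : M.IsInterval lo hi := by
  obtain ⟨f, hf⟩ := h
  refine ⟨hX.one_le, hX.lo_le, hX.le, fun x hx => ?_, fun x hx => ?_, fun a hs ht => ?_⟩
  · have := hX.subsingleton x hx
    exact (hf x).1.subsingleton
  · rw [(LinearEquiv.ofBijective (f.app x) (hf x)).finrank_eq, hX.finrank_eq_one x hx]
  · have hcomp : f.app a.tgt ∘ M.arr a = X.arr a ∘ f.app a.src := funext (f.comm_arr a)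
    rw [← (hf a.tgt).of_comp_iff', hcomp]
    exact (hX.bijective a hs ht).comp (hf a.src)

theorem Hom.forall_app_src_eq_smul_iff (f : X.Hom X) (c : k) {a : Arrow n ε}
    (ha : Function.Bijective (X.arr a)) :
    (∀ v, f.app a.src v = c • v) ↔ ∀ v, f.app a.tgt v = c • v := by
  refine ⟨fun h w => ?_, fun h v => ha.1 ?_⟩
  · obtain ⟨v, rfl⟩ := ha.2 w
    rw [f.comm_arr, h, map_smul]
  · rw [← f.comm_arr, h, map_smul]

theorem IsInterval.brick (hX : X.IsInterval lo hi) : X.Brick := by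
  obtain ⟨v₀, hv₀, hspan⟩ := finrank_eq_one_iff'.1 (hX.finrank_eq_one lo ⟨le_rfl, hX.lo_le⟩)
  refine ⟨fun h₀ => hv₀ (h₀ lo v₀), fun f => ?_⟩
  obtain ⟨c, hc⟩ := hspan (f.app lo v₀)
  have hscalar : ∀ x, lo ≤ x → x ≤ hi → ∀ v, f.app x v = c • v := fun x hx => by
    induction x, hx using Nat.le_induction with
    | base =>
      intro _ v
      obtain ⟨d, rfl⟩ := hspan v
      rw [map_smul, ← hc, smul_comm]
    | succ x hx ih =>
      intro hxhi
      obtain ⟨a, rfl⟩ : ∃ a : Arrow n ε, a.idx = x :=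
        ⟨⟨x, ε x, hX.one_le.trans hx, by have := hX.le; omega, rfl⟩, rfl⟩
      have hmem : ∀ y, y = a.idx ∨ y = a.idx + 1 → y ∈ Set.Icc lo hi := by
        rintro _ (rfl | rfl) <;> exact ⟨by omega, by omega⟩
      have ih := ih (by omega)
      have hends := a.src_eq_or_tgt_eq
      have hiff := f.forall_app_src_eq_smul_iff c
        (hX.bijective a (hmem _ (by omega)) (hmem _ (by omega)))
      rcases hends with ⟨hs, ht⟩ | ⟨hs, ht⟩
      · rw [hs, ht] at hiff
        exact hiff.1 ih
      · rw [hs, ht] at hiff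
        exact hiff.2 ih
  refine ⟨c, fun x v => ?_⟩
  by_cases hx : x ∈ Set.Icc lo hi
  · exact hscalar x hx.1 hx.2 v
  · have := hX.subsingleton x hx
    exact Subsingleton.elim _ _

theorem fiberMap_bijective {P Q : Prop} (hP : P) (hQ : Q) :
    Function.Bijective (fiberMap k P Q) := by
  have hval : ∀ v, (fiberMap k P Q v : k) = v := fun v => by
    rw [fiberMap, dif_pos ⟨hP, hQ⟩]
    rfl
  refine ⟨fun v w hvw => Subtype.ext ?_, fun w => ⟨⟨w, by simp [fiber, hP]⟩, Subtype.ext (hval _)⟩⟩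
  rw [← hval v, ← hval w, hvw]

theorem arr_intervalRep : ∀ a : Arrow n ε, (intervalRep k n ε lo hi).arr a =
    fiberMap k (SuppCond n lo hi a.src) (SuppCond n lo hi a.tgt)
  | ⟨_, true, _, _, hε⟩ => if_pos hε
  | ⟨_, false, _, _, hε⟩ => if_neg (Bool.eq_false_iff.1 hε)

theorem isInterval_intervalRep (hlo : 1 ≤ lo) (hle : lo ≤ hi) (hhi : hi ≤ n + 2) :
    (intervalRep k n ε lo hi).IsInterval lo hi where
  one_le := hlo
  lo_le := hle
  le := hhi
  subsingleton x hx := by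
    have hS : ¬SuppCond n lo hi x := fun h => hx ⟨h.1, h.2.1⟩
    change Subsingleton (fiber k _)
    rw [fiber, if_neg hS]
    infer_instance
  finrank_eq_one x hx := by
    have hS : SuppCond n lo hi x := ⟨hx.1, hx.2, hlo.trans hx.1, hx.2.trans hhi⟩
    change Module.finrank k (fiber k _) = 1
    rw [fiber, if_pos hS, finrank_top, Module.finrank_self]
  bijective a hs ht := by
    have hS : ∀ x ∈ Set.Icc lo hi, SuppCond n lo hi x :=
      fun x hx => ⟨hx.1, hx.2, hlo.trans hx.1, hx.2.trans hhi⟩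
    rw [arr_intervalRep]
    exact fiberMap_bijective (hS _ hs) (hS _ ht)

end ARep

/-- `s` is the vertex set of a maximal path which, extended against its direction by one vertex,
would start at `p`, and extended along its direction would end at `q`: by maximality, the arrow
joining `p` to `s` leaves `s`, and the arrow joining `q` to `s` enters `s`. -/
def IsMaxPath (n : ℕ) (ε : ℕ → Bool) (s : Set ℕ) (p q : ℕ) : Prop :=
  ∀ a : Arrow n ε, (a.src ∈ s ∧ a.tgt ∈ s ∧ p ∈ a.srcSide ∧ q ∉ a.srcSide) ∨
    (a.src ∉ s ∧ a.tgt ∉ s) ∨ (a.src ∈ s ∧ a.tgt ∉ s ∧ a.tgt = p ∧ s ⊆ a.srcSide) ∨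
    (a.src ∉ s ∧ a.tgt ∈ s ∧ a.src = q ∧ Disjoint s a.srcSide)

variable {lo hi : ℕ}

theorem MaxIncr.isMaxPath (h : MaxIncr n ε lo hi) :
    IsMaxPath n ε (Set.Icc lo hi) (lo - 1) (hi + 1) := by
  obtain ⟨hlo, hle, -, hin, hleft, hright⟩ := h
  rintro ⟨i, _ | _, h₁, h₂, hε⟩ <;>
    simp only [Arrow.src, Arrow.tgt, Arrow.srcSide, Set.mem_Icc, Set.subset_def, Set.disjoint_left,
      Set.mem_ofPred_eq, reduceCtorEq, iff_true, iff_false]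
  · have hout : ¬(lo ≤ i ∧ i < hi) := fun ⟨hi₁, hi₂⟩ => by simp [hin i hi₁ hi₂] at hε
    obtain h | rfl | rfl : (i + 1 < lo ∨ hi < i) ∨ lo = i + 1 ∨ hi = i := by omega
    · omega
    · exact .inr (.inr (.inl ⟨by omega, by omega, by omega, fun x hx => by omega⟩))
    · exact .inr (.inr (.inr ⟨by omega, by omega, by omega, fun x hx => by omega⟩))
  · have hl : i + 1 ≠ lo := fun h => by grind
    have hr : i ≠ hi := fun h => by grind
    omega

theorem MaxDecr.isMaxPath (h : MaxDecr n ε hi lo) :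
    IsMaxPath n ε (Set.Icc lo hi) (hi + 1) (lo - 1) := by
  obtain ⟨hlo, hle, -, hin, hright, hleft⟩ := h
  rintro ⟨i, _ | _, h₁, h₂, hε⟩ <;>
    simp only [Arrow.src, Arrow.tgt, Arrow.srcSide, Set.mem_Icc, Set.subset_def, Set.disjoint_left,
      Set.mem_ofPred_eq, reduceCtorEq, iff_true, iff_false]
  · have hl : i + 1 ≠ lo := fun h => by grind
    have hr : i ≠ hi := fun h => by grind
    omega
  · have hout : ¬(lo ≤ i ∧ i < hi) := fun ⟨hi₁, hi₂⟩ => by simp [hin i hi₁ hi₂] at hε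
    obtain h | rfl | rfl : (i + 1 < lo ∨ hi < i) ∨ lo = i + 1 ∨ hi = i := by omega
    · omega
    · exact .inr (.inr (.inr ⟨by omega, by omega, by omega, fun x hx => by omega⟩))
    · exact .inr (.inr (.inl ⟨by omega, by omega, by omega, fun x hx => by omega⟩))

theorem ARep.IsInterval.hasSoleExit {X : ARep k n ε} {p q : ℕ} (hX : X.IsInterval lo hi)
    (hs : IsMaxPath n ε (Set.Icc lo hi) p q) : X.HasSoleExit p where
  injective a hp := by
    rcases hs a with ⟨hsrc, htgt, -⟩ | ⟨hsrc, -⟩ | ⟨-, -, rfl, -⟩ | ⟨hsrc, -⟩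
    · exact (hX.bijective a hsrc htgt).1
    · have := hX.subsingleton _ hsrc
      exact Function.injective_of_subsingleton _
    · exact absurd hp a.tgt_notMem_srcSide
    · have := hX.subsingleton _ hsrc
      exact Function.injective_of_subsingleton _
  subsingleton_or a hp := by
    rcases hs a with ⟨-, -, hp', -⟩ | ⟨hsrc, -⟩ | ⟨hsrc, -, hp', hsub⟩ | ⟨hsrc, -⟩
    · exact absurd hp' hp
    · exact .inl (hX.subsingleton _ hsrc)
    · exact .inr ⟨hp', fun x hx => hX.subsingleton x fun hxs => hx (hsub hxs),
        hX.finrank_eq_one _ hsrc⟩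
    · exact .inl (hX.subsingleton _ hsrc)

theorem ARep.IsInterval.hasSoleEntry {X : ARep k n ε} {p q : ℕ} (hX : X.IsInterval lo hi)
    (hs : IsMaxPath n ε (Set.Icc lo hi) p q) : X.HasSoleEntry q where
  surjective a hq := by
    rcases hs a with ⟨hsrc, htgt, -⟩ | ⟨-, htgt⟩ | ⟨-, htgt, -⟩ | ⟨-, -, rfl, -⟩
    · exact (hX.bijective a hsrc htgt).2
    · have := hX.subsingleton _ htgt
      exact Function.surjective_to_subsingleton _
    · have := hX.subsingleton _ htgt
      exact Function.surjective_to_subsingleton _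
    · exact absurd a.src_mem_srcSide hq
  subsingleton_or a hq := by
    rcases hs a with ⟨-, -, -, hq'⟩ | ⟨-, htgt⟩ | ⟨-, htgt, -⟩ | ⟨-, htgt, hq', hdisj⟩
    · exact absurd hq hq'
    · exact .inl (hX.subsingleton _ htgt)
    · exact .inl (hX.subsingleton _ htgt)
    · exact .inr ⟨hq', fun x hx => hX.subsingleton x fun hxs => hdisj.notMem_of_mem_left hxs hx,
        hX.finrank_eq_one _ htgt⟩

/-! ### Hooks and cohooks -/

theorem maxIncr_or_maxDecr_of_isHook {a lo hi : ℕ} (ha : a ≤ n + 1)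
    (h : IsHook n ε a lo hi) : MaxIncr n ε lo hi ∨ MaxDecr n ε hi lo := by
  unfold IsHook at h
  split_ifs at h with hε
  · obtain ⟨rfl, hlo, hle, hin, hleft⟩ := h
    exact .inr ⟨hlo, hle, by omega, hin, .inr hε, hleft⟩
  · obtain ⟨rfl, hle, hhi, hin, hright⟩ := h
    exact .inl ⟨by omega, hle, hhi, hin, .inr (Bool.eq_false_iff.2 hε), hright⟩

theorem maxIncr_or_maxDecr_of_isCohook {a lo hi : ℕ} (ha : a ≤ n + 1)
    (h : IsCohook n ε a lo hi) : MaxIncr n ε lo hi ∨ MaxDecr n ε hi lo := by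
  unfold IsCohook at h
  split_ifs at h with hε
  · obtain ⟨rfl, hle, hhi, hin, hright⟩ := h
    exact .inr ⟨by omega, hle, hhi, hin, hright, .inr hε⟩
  · obtain ⟨rfl, hlo, hle, hin, hleft⟩ := h
    exact .inl ⟨hlo, hle, by omega, hin, hleft, .inr (Bool.eq_false_iff.2 hε)⟩

theorem MaxAlmostRigid.isSummand_of_brick {T X : ARep k n ε} (hT : MaxAlmostRigid T)
    (hX : X.Brick)
    (hleft : ∀ A B : ARep k n ε, A.Iso X → A.Indec → B.Indec →
      ExtZero A B ∨ ExtOneDimIndecMid A B)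
    (hright : ∀ A B : ARep k n ε, B.Iso X → A.Indec → B.Indec →
      ExtZero A B ∨ ExtOneDimIndecMid A B) : X.IsSummand T := by
  by_contra hXT
  have hsummand : ∀ A : ARep k n ε, A.Indec → A.IsSummand (T.dsum X) → A.IsSummand T ∨ A.Iso X :=
    fun A hA h => (hX.isSummand_of_dsum_or_isSummand h).imp_right (hA.iso_of_isSummand hX.1)
  refine hT.2 X hX.1 ⟨hT.1.1.dsum_brick hX hXT, fun A B hA hB hAT hBT => ?_⟩
  rcases hsummand A hA hAT with hAT | hAX
  · rcases hsummand B hB hBT with hBT | hBX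
    · exact hT.1.2 A B hA hB hAT hBT
    · exact hright A B hBX hA hB
  · exact hleft A B hAX hA hB

theorem MaxAlmostRigid.isSummand_of_isMaxPath {T X : ARep k n ε} (hT : MaxAlmostRigid T)
    {lo hi p q : ℕ} (hX : X.IsInterval lo hi) (hpath : IsMaxPath n ε (Set.Icc lo hi) p q) :
    X.IsSummand T :=
  hT.isSummand_of_brick hX.brick
    (fun _ _ hAX => ((hX.of_iso hAX).hasSoleExit hpath).extZero_or_extOneDimIndecMid)
    (fun _ _ hBX hA hB => ((hX.of_iso hBX).hasSoleEntry hpath).extZero_or_extOneDimIndecMid hB hA)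

end Representations

/-- every maximal almost rigid representation of `Q` contains every hook
and cohook representation `H(α)`, `C(α)` as a direct summand. -/
theorem stmt_16 (k : Type) [Field k] (n : ℕ) (ε : ℕ → Bool) (T : ARep k n ε)
    (hT : MaxAlmostRigid T) :
    ∀ a, 1 ≤ a → a ≤ n + 1 → ∀ lo hi, (IsHook n ε a lo hi ∨ IsCohook n ε a lo hi) →
      (intervalRep k n ε lo hi).IsSummand T := by
  intro a _ ha lo hi h
  obtain hincr | hdecr : MaxIncr n ε lo hi ∨ MaxDecr n ε hi lo :=
    h.elim (maxIncr_or_maxDecr_of_isHook ha) (maxIncr_or_maxDecr_of_isCohook ha)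
  · have hX := ARep.isInterval_intervalRep (k := k) (ε := ε) hincr.1 hincr.2.1 hincr.2.2.1
    exact hT.isSummand_of_isMaxPath hX hincr.isMaxPath
  · have hX := ARep.isInterval_intervalRep (k := k) (ε := ε) hdecr.1 hdecr.2.1 hdecr.2.2.1
    exact hT.isSummand_of_isMaxPath hX hdecr.isMaxPath

end CambrianA
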